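/- arXiv:2006.10581 — 4 statements merged into one kernel-verified Lean document; each statement's English description precedes it below -/
import Mathlib

section
/- Let d ≥ 1, let z be a standard Gaussian vector in ℝ^d, and let a, b ∈ ℝ^d be nonzero vectors with γ := ⟨a, b⟩ / (‖a‖ ‖b‖). Then E[|φ(⟨a, z⟩) − φ(⟨b, z⟩)|²] = (1/2) ‖a − b‖² − ‖a‖ ‖b‖ · (√(1 − γ²) − γ arccos(γ)) / π. -/
/-!
A centered Gaussian pair is determined in law by its variances `σ²`, `τ²` and its covariance
`σ τ cos θ`, so it may be replaced by `(σ z₁, τ (z₁ cos θ + z₂ sin θ))` with `z` standard Gaussian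
in the plane. The product of the two rectified coordinates is homogeneous of degree two; in polar
coordinates its expectation is therefore a radial Gamma integral times the circle integral of
`relu (cos t) * relu (cos (t - θ))`, whose integrand lives on an arc of length `π - θ`. Expanding
the square of the difference leaves only this mixed moment and its value at `θ = 0`.
-/

open MeasureTheory ProbabilityTheory

/-- The ReLU function. -/
noncomputable def relu (t : ℝ) : ℝ := max t 0

open Set Real

lemma relu_of_nonneg {t : ℝ} (ht : 0 ≤ t) : relu t = t := max_eq_left ht

lemma relu_of_nonpos {t : ℝ} (ht : t ≤ 0) : relu t = 0 := max_eq_right ht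

lemma relu_mul_of_nonneg {r : ℝ} (hr : 0 ≤ r) (t : ℝ) : relu (r * t) = r * relu t := by
  simp only [relu, mul_max_of_nonneg t 0 hr, mul_zero]

lemma gaussianPDFReal_mul_gaussianPDFReal_polar (r t : ℝ) :
    gaussianPDFReal 0 1 (r * cos t) * gaussianPDFReal 0 1 (r * sin t) =
      (2 * π)⁻¹ * exp (-r ^ 2 / 2) := by
  have hconst : (√(2 * π))⁻¹ * (√(2 * π))⁻¹ = (2 * π)⁻¹ := by
    rw [← mul_inv, mul_self_sqrt (by positivity)]
  have hexp : exp (-(r * cos t) ^ 2 / 2) * exp (-(r * sin t) ^ 2 / 2) = exp (-r ^ 2 / 2) := by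
    rw [← exp_add]
    congr 1
    linear_combination (-r ^ 2 / 2) * sin_sq_add_cos_sq t
  simp only [gaussianPDFReal, NNReal.coe_one, mul_one, sub_zero]
  rw [mul_mul_mul_comm, hconst, hexp]

lemma integral_rpow_mul_exp_neg_sq_div_two {k : ℝ} (hk : -1 < k) :
    ∫ r in Ioi (0 : ℝ), r ^ k * exp (-r ^ 2 / 2) =
      2 ^ ((k - 1) / 2) * Gamma ((k + 1) / 2) := by
  have h := integral_rpow_mul_exp_neg_mul_rpow (p := 2) (b := 1 / 2) two_pos hk one_half_pos
  have hexp (r : ℝ) : -r ^ 2 / 2 = -(1 / 2) * r ^ (2 : ℝ) := by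
    rw [rpow_two]
    ring
  have hpow : (1 / 2 : ℝ) ^ (-(k + 1) / 2) * (1 / 2) = 2 ^ ((k - 1) / 2) := by
    rw [one_div, inv_rpow zero_le_two, ← rpow_neg zero_le_two, ← rpow_neg_one 2,
      ← rpow_add two_pos]
    congr 1
    ring
  simp_rw [hexp, h, hpow]

lemma integral_gaussianReal_prod_eq_integral_polar {E : Type*} [NormedAddCommGroup E]
    [NormedSpace ℝ E] (F : ℝ × ℝ → E) :
    ∫ p, F p ∂((gaussianReal 0 1).prod (gaussianReal 0 1)) =
      (2 * π)⁻¹ • ∫ q in Ioi (0 : ℝ) ×ˢ Ioo (-π) π,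
        (q.1 * exp (-q.1 ^ 2 / 2)) • F (q.1 * cos q.2, q.1 * sin q.2) := by
  rw [gaussianReal_of_var_ne_zero 0 one_ne_zero,
    prod_withDensity (measurable_gaussianPDF 0 1) (measurable_gaussianPDF 0 1),
    integral_withDensity_eq_integral_toReal_smul (by fun_prop)
      (.of_forall fun _ ↦ ENNReal.mul_lt_top gaussianPDF_lt_top gaussianPDF_lt_top),
    ← Measure.volume_eq_prod, ← integral_comp_polarCoord_symm, ← integral_smul]
  refine setIntegral_congr_fun polarCoord.open_target.measurableSet fun q _ ↦ ?_
  simp only [polarCoord_symm_apply, ENNReal.toReal_mul, toReal_gaussianPDF,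
    gaussianPDFReal_mul_gaussianPDFReal_polar, smul_smul]
  congr 1
  ring

lemma integral_gaussianReal_prod_of_homogeneous {E : Type*} [NormedAddCommGroup E]
    [NormedSpace ℝ E] {F : ℝ × ℝ → E} {k : ℝ} (hk : -2 < k)
    (hF : ∀ r : ℝ, 0 < r → ∀ p, F (r • p) = r ^ k • F p) :
    ∫ p, F p ∂((gaussianReal 0 1).prod (gaussianReal 0 1)) =
      (2 ^ (k / 2) * Gamma (k / 2 + 1) / (2 * π)) • ∫ t in -π..π, F (cos t, sin t) := by
  have hpolar : ∀ q ∈ Ioi (0 : ℝ) ×ˢ Ioo (-π) π,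
      (q.1 * exp (-q.1 ^ 2 / 2)) • F (q.1 * cos q.2, q.1 * sin q.2) =
        (q.1 ^ (k + 1) * exp (-q.1 ^ 2 / 2)) • F (cos q.2, sin q.2) := by
    rintro ⟨r, t⟩ ⟨hr, -⟩
    have hr : 0 < r := hr
    have h := hF r hr (cos t, sin t)
    simp only [Prod.smul_mk, smul_eq_mul] at h
    rw [h, smul_smul, rpow_add_one hr.ne']
    congr 1
    ring
  rw [integral_gaussianReal_prod_eq_integral_polar,
    setIntegral_congr_fun (measurableSet_Ioi.prod measurableSet_Ioo) hpolar,
    Measure.volume_eq_prod, ← Measure.prod_restrict,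
    integral_prod_smul (fun r : ℝ ↦ r ^ (k + 1) * exp (-r ^ 2 / 2)) (fun t ↦ F (cos t, sin t)),
    integral_rpow_mul_exp_neg_sq_div_two (by linarith),
    intervalIntegral.integral_of_le (by linarith [pi_pos]), integral_Ioc_eq_integral_Ioo, smul_smul]
  congr 1
  ring_nf

lemma integral_cos_mul_cos_sub (θ u v : ℝ) :
    ∫ t in u..v, cos t * cos (t - θ) =
      ((v - u) * cos θ + (sin (2 * v - θ) - sin (2 * u - θ)) / 2) / 2 := by
  have hprod (t : ℝ) : cos t * cos (t - θ) = (cos θ + cos (2 * t - θ)) / 2 := by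
    have h := two_mul_cos_mul_cos t (t - θ)
    ring_nf at h ⊢
    linarith
  simp_rw [hprod]
  rw [intervalIntegral.integral_div, intervalIntegral.integral_add
      (by simp) (Continuous.intervalIntegrable (by fun_prop) _ _),
    intervalIntegral.integral_comp_mul_sub _ two_ne_zero]
  simp only [intervalIntegral.integral_const, integral_cos, smul_eq_mul]
  ring

lemma integral_relu_cos_mul_relu_cos_sub {θ : ℝ} (hθ₀ : 0 ≤ θ) (hθ : θ ≤ π) :
    ∫ t in -π..π, relu (cos t) * relu (cos (t - θ)) = (sin θ + (π - θ) * cos θ) / 2 := by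
  have hzero : ∀ t ∈ Ioc (-π) π \ Ioc (θ - π / 2) (π / 2),
      relu (cos t) * relu (cos (t - θ)) = 0 := by
    rintro t ⟨⟨htl, htr⟩, ht⟩
    have hcos : cos t ≤ 0 ∨ cos (t - θ) ≤ 0 := by
      rcases lt_or_ge (π / 2) t with h₁ | h₁
      · exact .inl (cos_nonpos_of_pi_div_two_le_of_le h₁.le (by linarith))
      have h₂ : t ≤ θ - π / 2 := not_lt.1 fun h ↦ ht ⟨h, h₁⟩
      rcases le_total t (-(π / 2)) with h₃ | h₃
      · rw [← cos_neg]
        exact .inl (cos_nonpos_of_pi_div_two_le_of_le (by linarith) (by linarith))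
      · rw [← cos_neg (t - θ)]
        exact .inr (cos_nonpos_of_pi_div_two_le_of_le (by linarith) (by linarith))
    rcases hcos with h | h <;> simp [relu_of_nonpos h]
  have hpos : ∀ t ∈ Ioc (θ - π / 2) (π / 2),
      relu (cos t) * relu (cos (t - θ)) = cos t * cos (t - θ) := by
    rintro t ⟨htl, htr⟩
    rw [relu_of_nonneg (cos_nonneg_of_neg_pi_div_two_le_of_le (by linarith) htr),
      relu_of_nonneg (cos_nonneg_of_neg_pi_div_two_le_of_le (by linarith) (by linarith))]
  calc ∫ t in -π..π, relu (cos t) * relu (cos (t - θ))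
      = ∫ t in Ioc (θ - π / 2) (π / 2), relu (cos t) * relu (cos (t - θ)) := by
        rw [intervalIntegral.integral_of_le (by linarith [pi_pos])]
        exact setIntegral_eq_of_subset_of_forall_sdiff_eq_zero measurableSet_Ioc
          (Ioc_subset_Ioc (by linarith) (by linarith)) hzero
    _ = ∫ t in (θ - π / 2)..(π / 2), cos t * cos (t - θ) := by
        rw [setIntegral_congr_fun measurableSet_Ioc hpos,
          intervalIntegral.integral_of_le (by linarith)]
    _ = (sin θ + (π - θ) * cos θ) / 2 := by
        have hu : 2 * (θ - π / 2) - θ = -(π - θ) := by ring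
        have hv : 2 * (π / 2) - θ = π - θ := by ring
        rw [integral_cos_mul_cos_sub, hu, hv, sin_neg, sin_pi_sub]
        ring

lemma integral_relu_mul_relu_gaussianReal_prod {θ : ℝ} (hθ₀ : 0 ≤ θ) (hθ : θ ≤ π) :
    ∫ p : ℝ × ℝ, relu p.1 * relu (cos θ * p.1 + sin θ * p.2)
      ∂((gaussianReal 0 1).prod (gaussianReal 0 1)) =
        (sin θ + (π - θ) * cos θ) / (2 * π) := by
  have hrot (t : ℝ) : cos θ * cos t + sin θ * sin t = cos (t - θ) := by
    rw [cos_sub]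
    ring
  rw [integral_gaussianReal_prod_of_homogeneous (k := 2) (by norm_num)]
  · simp_rw [hrot, integral_relu_cos_mul_relu_cos_sub hθ₀ hθ]
    norm_num
  · intro r hr p
    have hlin : cos θ * (r * p.1) + sin θ * (r * p.2) = r * (cos θ * p.1 + sin θ * p.2) := by ring
    simp only [Prod.smul_fst, Prod.smul_snd, smul_eq_mul, hlin, relu_mul_of_nonneg hr.le, rpow_two]
    ring

section HasGaussianLaw

variable {Ω Ω' : Type*} {mΩ : MeasurableSpace Ω} {mΩ' : MeasurableSpace Ω'} {P : Measure Ω}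
  {P' : Measure Ω'} {X Y : Ω → ℝ} {X' Y' : Ω' → ℝ}

lemma covariance_sq_le_variance_mul_variance [IsFiniteMeasure P] (hX : MemLp X 2 P)
    (hY : MemLp Y 2 P) : cov[X, Y; P] ^ 2 ≤ Var[X; P] * Var[Y; P] := by
  have hquad (t : ℝ) : 0 ≤ Var[X; P] * (t * t) + 2 * cov[X, Y; P] * t + Var[Y; P] := by
    have h := variance_fun_add (hX.const_mul t) hY
    rw [variance_const_mul, covariance_const_mul_left] at h
    linarith [variance_nonneg (fun ω ↦ t * X ω + Y ω) P]
  have hdiscrim := discrim_le_zero hquad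
  rw [discrim] at hdiscrim
  linarith

lemma charFunDual_map_prodMk_of_hasGaussianLaw (h : HasGaussianLaw (fun ω ↦ (X ω, Y ω)) P)
    (L : StrongDual ℝ (ℝ × ℝ)) :
    charFunDual (P.map fun ω ↦ (X ω, Y ω)) L =
      Complex.exp ((L (1, 0) * P[X] + L (0, 1) * P[Y] : ℝ) * Complex.I -
        (L (1, 0) ^ 2 * Var[X; P] + 2 * (L (1, 0) * (L (0, 1) * cov[X, Y; P])) +
          L (0, 1) ^ 2 * Var[Y; P] : ℝ) / 2) := by
  have := h.isProbabilityMeasure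
  have hL : (fun ω ↦ L (X ω, Y ω)) = fun ω ↦ L (1, 0) * X ω + L (0, 1) * Y ω := by
    ext ω
    have hXY : (X ω, Y ω) = X ω • ((1, 0) : ℝ × ℝ) + Y ω • ((0, 1) : ℝ × ℝ) := by simp
    rw [hXY, map_add, map_smul, map_smul, smul_eq_mul, smul_eq_mul, mul_comm, mul_comm (Y ω)]
  rw [h.charFunDual_map_eq_fun, hL,
    integral_add (h.fst.integrable.const_mul _) (h.snd.integrable.const_mul _),
    integral_const_mul, integral_const_mul,
    variance_fun_add (h.fst.memLp_two.const_mul _) (h.snd.memLp_two.const_mul _),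
    variance_const_mul, variance_const_mul, covariance_const_mul_left, covariance_const_mul_right]

lemma identDistrib_prodMk_of_hasGaussianLaw (h : HasGaussianLaw (fun ω ↦ (X ω, Y ω)) P)
    (h' : HasGaussianLaw (fun ω ↦ (X' ω, Y' ω)) P') (hX : P[X] = P'[X']) (hY : P[Y] = P'[Y'])
    (hVarX : Var[X; P] = Var[X'; P']) (hVarY : Var[Y; P] = Var[Y'; P'])
    (hcov : cov[X, Y; P] = cov[X', Y'; P']) :
    IdentDistrib (fun ω ↦ (X ω, Y ω)) (fun ω ↦ (X' ω, Y' ω)) P P' where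
  aemeasurable_fst := h.aemeasurable
  aemeasurable_snd := h'.aemeasurable
  map_eq := by
    have := h.isGaussian_map
    have := h'.isGaussian_map
    apply Measure.ext_of_charFunDual
    ext L
    rw [charFunDual_map_prodMk_of_hasGaussianLaw h, charFunDual_map_prodMk_of_hasGaussianLaw h',
      hX, hY, hVarX, hVarY, hcov]

end HasGaussianLaw

section ProductMeasure

variable {ι : Type*} [Fintype ι]

lemma integral_sum_mul_pi {μ : ι → Measure ℝ} [∀ i, IsProbabilityMeasure (μ i)]
    (hμ : ∀ i, Integrable id (μ i)) (a : ι → ℝ) :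
    ∫ z, ∑ i, a i * z i ∂(Measure.pi μ) = ∑ i, a i * ∫ x, x ∂(μ i) := by
  have hcoord (i : ι) : Integrable (fun z : ι → ℝ ↦ z i) (Measure.pi μ) :=
    (measurePreserving_eval μ i).integrable_comp_of_integrable (hμ i)
  rw [integral_finsetSum _ fun i _ ↦ (hcoord i).const_mul (a i)]
  simp_rw [integral_const_mul, integral_eval]

lemma covariance_sum_mul_pi {μ : ι → Measure ℝ} [∀ i, IsProbabilityMeasure (μ i)]
    (hμ : ∀ i, MemLp id 2 (μ i)) (a b : ι → ℝ) :
    cov[fun z ↦ ∑ i, a i * z i, fun z ↦ ∑ i, b i * z i; Measure.pi μ] =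
      ∑ i, a i * b i * Var[id; μ i] := by
  classical
  have hmem (i : ι) : MemLp (fun z : ι → ℝ ↦ z i) 2 (Measure.pi μ) :=
    (hμ i).comp_measurePreserving (measurePreserving_eval μ i)
  have hindep : iIndepFun (fun i (z : ι → ℝ) ↦ z i) (Measure.pi μ) :=
    iIndepFun_pi fun _ ↦ aemeasurable_id
  have hcov (i j : ι) :
      cov[fun z ↦ z i, fun z ↦ z j; Measure.pi μ] = if i = j then Var[id; μ i] else 0 := by
    split_ifs with hij
    · subst hij
      rw [covariance_self (measurable_pi_apply i).aemeasurable,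
        ← (measurePreserving_eval μ i).variance_fun_comp aemeasurable_id]
      rfl
    · exact (hindep.indepFun hij).covariance_eq_zero (hmem i) (hmem j)
  rw [covariance_fun_sum_fun_sum (fun i ↦ (hmem i).const_mul (a i))
    (fun i ↦ (hmem i).const_mul (b i))]
  simp [covariance_const_mul_left, covariance_const_mul_right, hcov, mul_assoc, mul_left_comm]

lemma hasGaussianLaw_prodMk_sum_mul_pi {μ : ι → Measure ℝ} [∀ i, IsGaussian (μ i)]
    (a b : ι → ℝ) :
    HasGaussianLaw (fun z : ι → ℝ ↦ (∑ i, a i * z i, ∑ i, b i * z i)) (Measure.pi μ) := by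
  have hcoord (i : ι) : HasGaussianLaw (fun z : ι → ℝ ↦ z i) (Measure.pi μ) :=
    ⟨(measurePreserving_eval μ i).map_eq ▸ inferInstance⟩
  have hjoint : HasGaussianLaw (fun z : ι → ℝ ↦ z) (Measure.pi μ) :=
    iIndepFun.hasGaussianLaw hcoord (iIndepFun_pi fun _ ↦ aemeasurable_id)
  let form (c : ι → ℝ) : StrongDual ℝ (ι → ℝ) := ∑ i, c i • .proj i
  simpa [form] using hjoint.map_fun ((form a).prod (form b))

end ProductMeasure

lemma integral_sum_mul_pi_gaussianReal {ι : Type*} [Fintype ι] (a : ι → ℝ) :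
    ∫ z, ∑ i, a i * z i ∂(Measure.pi fun _ : ι ↦ gaussianReal 0 1) = 0 := by
  rw [integral_sum_mul_pi fun _ ↦ (memLp_id_gaussianReal 1).integrable le_rfl]
  simp

lemma covariance_sum_mul_pi_gaussianReal {ι : Type*} [Fintype ι] (a b : ι → ℝ) :
    cov[fun z ↦ ∑ i, a i * z i, fun z ↦ ∑ i, b i * z i;
      Measure.pi fun _ : ι ↦ gaussianReal 0 1] = ∑ i, a i * b i := by
  rw [covariance_sum_mul_pi fun _ ↦ memLp_id_gaussianReal 2]
  simp

lemma variance_sum_mul_pi_gaussianReal {ι : Type*} [Fintype ι] (a : ι → ℝ) :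
    Var[fun z ↦ ∑ i, a i * z i; Measure.pi fun _ : ι ↦ gaussianReal 0 1] = ∑ i, a i ^ 2 := by
  rw [← covariance_self (Measurable.aemeasurable (by fun_prop)), covariance_sum_mul_pi_gaussianReal]
  simp_rw [sq]

section ArcCosineKernel

variable {Ω : Type*} {mΩ : MeasurableSpace Ω} {P : Measure Ω} {X Y : Ω → ℝ} {σ τ θ : ℝ}

lemma integral_relu_mul_relu_of_hasGaussianLaw (h : HasGaussianLaw (fun ω ↦ (X ω, Y ω)) P)
    (hX : P[X] = 0) (hY : P[Y] = 0) (hσ : 0 ≤ σ) (hτ : 0 ≤ τ) (hVarX : Var[X; P] = σ ^ 2)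
    (hVarY : Var[Y; P] = τ ^ 2) (hθ₀ : 0 ≤ θ) (hθ : θ ≤ π) (hcov : cov[X, Y; P] = σ * τ * cos θ) :
    ∫ ω, relu (X ω) * relu (Y ω) ∂P = σ * τ * ((sin θ + (π - θ) * cos θ) / (2 * π)) := by
  let u : Fin 2 → ℝ := ![σ, 0]
  let v : Fin 2 → ℝ := ![τ * cos θ, τ * sin θ]
  have hident : IdentDistrib (fun ω ↦ (X ω, Y ω)) (fun z ↦ (∑ i, u i * z i, ∑ i, v i * z i)) P
      (Measure.pi fun _ ↦ gaussianReal 0 1) := by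
    apply identDistrib_prodMk_of_hasGaussianLaw h (hasGaussianLaw_prodMk_sum_mul_pi u v)
    · rw [hX, integral_sum_mul_pi_gaussianReal]
    · rw [hY, integral_sum_mul_pi_gaussianReal]
    · rw [hVarX, variance_sum_mul_pi_gaussianReal]
      simp [u]
    · rw [hVarY, variance_sum_mul_pi_gaussianReal]
      simp [v, mul_pow, ← mul_add]
    · rw [hcov, covariance_sum_mul_pi_gaussianReal]
      simp [u, v, mul_assoc]
  have hrelu : Measurable fun p : ℝ × ℝ ↦ relu p.1 * relu p.2 := by
    unfold relu
    fun_prop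
  have hlin (x y : ℝ) : τ * cos θ * x + τ * sin θ * y = τ * (cos θ * x + sin θ * y) := by ring
  calc ∫ ω, relu (X ω) * relu (Y ω) ∂P
      = ∫ z : Fin 2 → ℝ, relu (∑ i, u i * z i) * relu (∑ i, v i * z i)
          ∂(Measure.pi fun _ ↦ gaussianReal 0 1) := (hident.comp hrelu).integral_eq
    _ = ∫ p : ℝ × ℝ, σ * τ * (relu p.1 * relu (cos θ * p.1 + sin θ * p.2))
          ∂((gaussianReal 0 1).prod (gaussianReal 0 1)) := by
        rw [← (measurePreserving_finTwoArrow (gaussianReal 0 1)).integral_comp'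
          (f := MeasurableEquiv.finTwoArrow)]
        simp [u, v, hlin, relu_mul_of_nonneg, hσ, hτ, mul_mul_mul_comm]
    _ = σ * τ * ((sin θ + (π - θ) * cos θ) / (2 * π)) := by
        rw [integral_const_mul, integral_relu_mul_relu_gaussianReal_prod hθ₀ hθ]

lemma integral_relu_sq_of_hasGaussianLaw (h : HasGaussianLaw X P) (hX : P[X] = 0) :
    ∫ ω, relu (X ω) ^ 2 ∂P = Var[X; P] / 2 := by
  have hdiag : HasGaussianLaw (fun ω ↦ (X ω, X ω)) P :=
    h.map_fun ((ContinuousLinearMap.id ℝ ℝ).prod (.id ℝ ℝ))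
  have hσ : Var[X; P] = √Var[X; P] ^ 2 := (sq_sqrt (variance_nonneg X P)).symm
  have hcov : cov[X, X; P] = √Var[X; P] * √Var[X; P] * cos 0 := by
    rw [covariance_self h.aemeasurable, cos_zero, mul_one, mul_self_sqrt (variance_nonneg X P)]
  simp_rw [sq]
  rw [integral_relu_mul_relu_of_hasGaussianLaw hdiag hX hX (sqrt_nonneg _) (sqrt_nonneg _) hσ hσ
    le_rfl pi_pos.le hcov, mul_self_sqrt (variance_nonneg X P), sin_zero, cos_zero]
  field_simp
  ring

lemma integral_relu_sub_relu_sq_of_hasGaussianLaw (h : HasGaussianLaw (fun ω ↦ (X ω, Y ω)) P)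
    (hX : P[X] = 0) (hY : P[Y] = 0) (hσ : 0 ≤ σ) (hτ : 0 ≤ τ) (hVarX : Var[X; P] = σ ^ 2)
    (hVarY : Var[Y; P] = τ ^ 2) (hθ₀ : 0 ≤ θ) (hθ : θ ≤ π) (hcov : cov[X, Y; P] = σ * τ * cos θ) :
    ∫ ω, (relu (X ω) - relu (Y ω)) ^ 2 ∂P =
      Var[fun ω ↦ X ω - Y ω; P] / 2 - σ * τ * ((sin θ - θ * cos θ) / π) := by
  have := h.isProbabilityMeasure
  have hreluX : MemLp (fun ω ↦ relu (X ω)) 2 P := h.fst.memLp_two.pos_part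
  have hreluY : MemLp (fun ω ↦ relu (Y ω)) 2 P := h.snd.memLp_two.pos_part
  have hexpand (ω : Ω) : (relu (X ω) - relu (Y ω)) ^ 2 =
      relu (X ω) ^ 2 + relu (Y ω) ^ 2 - 2 * (relu (X ω) * relu (Y ω)) := by ring
  have hsq : Integrable (fun ω ↦ relu (X ω) ^ 2 + relu (Y ω) ^ 2) P :=
    hreluX.integrable_sq.add hreluY.integrable_sq
  have hmul : Integrable (fun ω ↦ relu (X ω) * relu (Y ω)) P := hreluX.integrable_mul hreluY
  simp_rw [hexpand]
  rw [integral_sub hsq (hmul.const_mul 2),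
    integral_add hreluX.integrable_sq hreluY.integrable_sq, integral_const_mul,
    integral_relu_sq_of_hasGaussianLaw h.fst hX, integral_relu_sq_of_hasGaussianLaw h.snd hY,
    integral_relu_mul_relu_of_hasGaussianLaw h hX hY hσ hτ hVarX hVarY hθ₀ hθ hcov,
    variance_fun_sub h.fst.memLp_two h.snd.memLp_two, hcov]
  field_simp
  ring

end ArcCosineKernel

theorem relu_diff_sq_moment_general {Ω : Type*} {mΩ : MeasurableSpace Ω} {P : Measure Ω}
    {X Y : Ω → ℝ} (h : HasGaussianLaw (fun ω ↦ (X ω, Y ω)) P) (hX : P[X] = 0) (hY : P[Y] = 0)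
    (hVarX : Var[X; P] ≠ 0) (hVarY : Var[Y; P] ≠ 0) {γ : ℝ}
    (hγ : γ = cov[X, Y; P] / (√Var[X; P] * √Var[Y; P])) :
    ∫ ω, (relu (X ω) - relu (Y ω)) ^ 2 ∂P =
      (1 / 2) * Var[fun ω ↦ X ω - Y ω; P] -
        √Var[X; P] * √Var[Y; P] * ((√(1 - γ ^ 2) - γ * arccos γ) / π) := by
  have := h.isProbabilityMeasure
  have hsqX := sq_sqrt (variance_nonneg X P)
  have hsqY := sq_sqrt (variance_nonneg Y P)
  have hσ : 0 < √Var[X; P] := sqrt_pos.2 ((variance_nonneg X P).lt_of_ne' hVarX)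
  have hτ : 0 < √Var[Y; P] := sqrt_pos.2 ((variance_nonneg Y P).lt_of_ne' hVarY)
  have hγ_le : |γ| ≤ 1 := by
    rw [← sq_le_one_iff_abs_le_one, hγ, div_pow, mul_pow, hsqX, hsqY]
    exact div_le_one_of_le₀
      (covariance_sq_le_variance_mul_variance h.fst.memLp_two h.snd.memLp_two)
      (mul_nonneg (variance_nonneg X P) (variance_nonneg Y P))
  have hcos : cos (arccos γ) = γ := cos_arccos (abs_le.1 hγ_le).1 (abs_le.1 hγ_le).2
  have hcov : cov[X, Y; P] = √Var[X; P] * √Var[Y; P] * cos (arccos γ) := by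
    rw [hcos, hγ, mul_div_cancel₀ _ (mul_pos hσ hτ).ne']
  rw [integral_relu_sub_relu_sq_of_hasGaussianLaw h hX hY hσ.le hτ.le hsqX.symm hsqY.symm
    (arccos_nonneg γ) (arccos_le_pi γ) hcov, sin_arccos, hcos]
  ring

/-- second moment of the difference of two rectified Gaussian linear forms. -/
theorem relu_diff_sq_moment (d : ℕ) (hd : 1 ≤ d) (a b : Fin d → ℝ)
    (ha : a ≠ 0) (hb : b ≠ 0) (γ : ℝ)
    (hγ : γ = (∑ i, a i * b i) /
      (Real.sqrt (∑ i, a i ^ 2) * Real.sqrt (∑ i, b i ^ 2))) :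
    (∫ z : Fin d → ℝ, (relu (∑ i, a i * z i) - relu (∑ i, b i * z i)) ^ 2
        ∂(Measure.pi fun _ : Fin d => gaussianReal 0 1)) =
      (1 / 2) * (∑ i, (a i - b i) ^ 2) -
        Real.sqrt (∑ i, a i ^ 2) * Real.sqrt (∑ i, b i ^ 2) *
          ((Real.sqrt (1 - γ ^ 2) - γ * Real.arccos γ) / Real.pi) := by
  have hsq {c : Fin d → ℝ} (hc : c ≠ 0) : ∑ i, c i ^ 2 ≠ 0 := by
    simpa [Finset.sum_eq_zero_iff_of_nonneg, sq_nonneg, funext_iff] using hc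
  simpa [covariance_sum_mul_pi_gaussianReal, variance_sum_mul_pi_gaussianReal, ← sub_mul,
    ← Finset.sum_sub_distrib, hsq ha, hsq hb, hγ] using relu_diff_sq_moment_general
      (hasGaussianLaw_prodMk_sum_mul_pi a b) (integral_sum_mul_pi_gaussianReal a)
      (integral_sum_mul_pi_gaussianReal b)
end

section
/- Let d ≥ 1, let z be a standard Gaussian vector in ℝ^d, and let a, b ∈ ℝ^d be arbitrary vectors (possibly zero). Then E[|φ(⟨a, z⟩) − φ(⟨b, z⟩)|²] ≥ (1/4) ‖a − b‖². -/
open MeasureTheory ProbabilityTheory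

/-!
Since `x = relu x - relu (-x)`, the difference `x - y` is the difference of
`relu x - relu y` and `relu (-x) - relu (-y)`, so its square is at most twice the sum of their
squares. Under a symmetric law these two squares have the same mean, and the factors of two
combine to the constant `1 / 4`. It is attained for `b = -a`.
-/

lemma relu_sub_relu_neg (x : ℝ) : relu x - relu (-x) = x :=
  posPart_sub_negPart x

lemma sub_sq_le_two_mul_relu_sub_sq_add (x y : ℝ) :
    (x - y) ^ 2 ≤ 2 * ((relu x - relu y) ^ 2 + (relu (-x) - relu (-y)) ^ 2) :=
  calc (x - y) ^ 2
      = ((relu x - relu y) + -(relu (-x) - relu (-y))) ^ 2 := by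
        congr 1
        linarith [relu_sub_relu_neg x, relu_sub_relu_neg y]
    _ ≤ 2 * ((relu x - relu y) ^ 2 + (-(relu (-x) - relu (-y))) ^ 2) := add_sq_le
    _ = 2 * ((relu x - relu y) ^ 2 + (relu (-x) - relu (-y)) ^ 2) := by rw [neg_sq]

lemma integrable_relu_sub_sq {α : Type*} [MeasurableSpace α] {μ : Measure α} {f g : α → ℝ}
    (hf : MemLp f 2 μ) (hg : MemLp g 2 μ) :
    Integrable (fun x ↦ (relu (f x) - relu (g x)) ^ 2) μ :=
  (hf.pos_part.sub hg.pos_part).integrable_sq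

theorem one_fourth_mul_integral_sub_sq_le_relu_of_odd {G : Type*} [AddGroup G] [MeasurableSpace G]
    [MeasurableNeg G] {μ : Measure G} [μ.IsNegInvariant] {f g : G → ℝ}
    (hf : MemLp f 2 μ) (hg : MemLp g 2 μ) (hf_odd : f.Odd) (hg_odd : g.Odd) :
    (1 / 4) * ∫ x, (f x - g x) ^ 2 ∂μ ≤ ∫ x, (relu (f x) - relu (g x)) ^ 2 ∂μ := by
  set h : G → ℝ := fun x ↦ (relu (f x) - relu (g x)) ^ 2
  have h_int : Integrable h μ := integrable_relu_sub_sq hf hg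
  have h_neg_int : Integrable (fun x ↦ h (-x)) μ := h_int.comp_neg
  have sq_le (x : G) : (f x - g x) ^ 2 ≤ 2 * (h x + h (-x)) := by
    simpa only [h, hf_odd x, hg_odd x] using sub_sq_le_two_mul_relu_sub_sq_add (f x) (g x)
  calc (1 / 4) * ∫ x, (f x - g x) ^ 2 ∂μ
      ≤ (1 / 4) * ∫ x, 2 * (h x + h (-x)) ∂μ := by
        gcongr
        exacts [(hf.sub hg).integrable_sq, (h_int.add h_neg_int).const_mul 2, sq_le]
    _ = (1 / 4) * (2 * (∫ x, h x ∂μ + ∫ x, h x ∂μ)) := by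
        rw [integral_const_mul, integral_add h_int h_neg_int, integral_neg_eq_self]
    _ = ∫ x, h x ∂μ := by ring

section LinearForm

variable {ι : Type*} [Fintype ι]

lemma odd_sum_mul (c : ι → ℝ) : Function.Odd fun z : ι → ℝ ↦ ∑ i, c i * z i := fun z ↦ by
  simp only [Pi.neg_apply, mul_neg, Finset.sum_neg_distrib]

variable {ν : ι → Measure ℝ} [∀ i, IsProbabilityMeasure (ν i)]

lemma memLp_sum_mul_pi {p : ENNReal} (hν : ∀ i, MemLp id p (ν i)) (c : ι → ℝ) :
    MemLp (fun z : ι → ℝ ↦ ∑ i, c i * z i) p (Measure.pi ν) :=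
  memLp_finsetSum _ fun i _ ↦
    ((hν i).comp_measurePreserving (measurePreserving_eval ν i)).const_mul (c i)

lemma variance_sum_mul_pi (hν : ∀ i, MemLp id 2 (ν i)) (c : ι → ℝ) :
    Var[fun z : ι → ℝ ↦ ∑ i, c i * z i; Measure.pi ν] = ∑ i, c i ^ 2 * Var[id; ν i] := by
  have h := variance_sum_pi fun i ↦ (hν i).const_mul (c i)
  simpa only [id_eq, ← variance_const_mul, Finset.sum_fn] using h

theorem relu_diff_sq_moment_lower_general [∀ i, (ν i).IsNegInvariant]
    (hν : ∀ i, MemLp id 2 (ν i)) (a b : ι → ℝ) :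
    (1 / 4) * ∑ i, (a i - b i) ^ 2 * Var[id; ν i] ≤
      ∫ z, (relu (∑ i, a i * z i) - relu (∑ i, b i * z i)) ^ 2 ∂Measure.pi ν :=
  calc (1 / 4) * ∑ i, (a i - b i) ^ 2 * Var[id; ν i]
      = (1 / 4) * Var[fun z : ι → ℝ ↦ ∑ i, (a i - b i) * z i; Measure.pi ν] := by
        rw [variance_sum_mul_pi hν fun i ↦ a i - b i]
    _ ≤ (1 / 4) * ∫ z, (∑ i, (a i - b i) * z i) ^ 2 ∂Measure.pi ν := by
        gcongr
        exact variance_le_expectation_sq (memLp_sum_mul_pi hν _).aestronglyMeasurable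
    _ = (1 / 4) * ∫ z, (∑ i, a i * z i - ∑ i, b i * z i) ^ 2 ∂Measure.pi ν := by
        simp only [sub_mul, Finset.sum_sub_distrib]
    _ ≤ ∫ z, (relu (∑ i, a i * z i) - relu (∑ i, b i * z i)) ^ 2 ∂Measure.pi ν :=
        one_fourth_mul_integral_sub_sq_le_relu_of_odd
          (memLp_sum_mul_pi hν a) (memLp_sum_mul_pi hν b)
          (odd_sum_mul a) (odd_sum_mul b)

end LinearForm

instance isNegInvariant_gaussianReal_zero (v : NNReal) : (gaussianReal 0 v).IsNegInvariant where
  neg_eq_self := gaussianReal_map_neg.trans (by rw [neg_zero])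

/-- lower bound for the second moment of the difference of two rectified
Gaussian linear forms. -/
theorem relu_diff_sq_moment_lower (d : ℕ) (hd : 1 ≤ d) (a b : Fin d → ℝ) :
    (∫ z : Fin d → ℝ, (relu (∑ i, a i * z i) - relu (∑ i, b i * z i)) ^ 2
        ∂(Measure.pi fun _ : Fin d => gaussianReal 0 1)) ≥
      (1 / 4) * (∑ i, (a i - b i) ^ 2) := by
  simpa only [variance_id_gaussianReal, NNReal.coe_one, mul_one] using
    relu_diff_sq_moment_lower_general (ν := fun _ ↦ gaussianReal 0 1)
      (fun _ ↦ memLp_id_gaussianReal 2) a b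
end

section
/- Let d, k, ℓ ≥ 1, σ > 0, let V ∈ ℝ^{k×ℓ}, let Σ_S ∈ ℝ^{d×d} be positive semidefinite and let A ∈ ℝ^{d×d} satisfy A Aᵀ = Σ_S. For W ∈ ℝ^{ℓ×d}, let P_W denote the law on ℝ^d × ℝ^k of the pair (A z, V φ(W A z) + σ w), where (z, w) is a standard Gaussian vector in ℝ^{d+k}. Then for any W₁, W₂ ∈ ℝ^{ℓ×d}, D_KL(P_{W₁} ‖ P_{W₂}) ≤ ‖V‖_op² · trace((W₁ − W₂) Σ_S (W₁ − W₂)ᵀ) / (2σ²). -/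
open MeasureTheory ProbabilityTheory Matrix

/-- The Kullback–Leibler divergence (in nats) of `P` with respect to `Q`, given by
`∫ log (dP/dQ) dP` (meaningful when `P ≪ Q`). -/
noncomputable def klDivR {α : Type*} [MeasurableSpace α] (P Q : Measure α) : ℝ :=
  ∫ x, Real.log (P.rnDeriv Q x).toReal ∂P

/-- The operator (spectral) norm of a matrix: the supremum of `‖M u‖` over
Euclidean-unit vectors `u`. -/
noncomputable def opNorm {m n : ℕ} (M : Matrix (Fin m) (Fin n) ℝ) : ℝ :=
  sSup {r : ℝ | ∃ u : Fin n → ℝ, ∑ i, u i ^ 2 = 1 ∧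
    r = Real.sqrt (∑ i, (M.mulVec u) i ^ 2)}

/-- The joint law of `(A z, V φ(W A z) + σ w)` where `(z, w)` is a standard Gaussian
vector in `ℝ^{d+k}`. -/
noncomputable def nnLaw (d k l : ℕ) (σ : ℝ) (V : Matrix (Fin k) (Fin l) ℝ)
    (A : Matrix (Fin d) (Fin d) ℝ) (W : Matrix (Fin l) (Fin d) ℝ) :
    Measure ((Fin d → ℝ) × (Fin k → ℝ)) :=
  Measure.map
    (fun zw : (Fin d → ℝ) × (Fin k → ℝ) =>
      (A.mulVec zw.1,
        V.mulVec (fun j => relu (W.mulVec (A.mulVec zw.1) j)) + σ • zw.2))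
    ((Measure.pi fun _ : Fin d => gaussianReal 0 1).prod
      (Measure.pi fun _ : Fin k => gaussianReal 0 1))

/-!
By the Cameron–Martin formula, shifting a standard Gaussian `w` by a vector `g` has density
`exp (⟪g, w⟫ - ‖g‖² / 2)`. If the shift is a function `g z` of an independent variable `z`, the law
of `(z, w + g z)` therefore has divergence `E ‖g z‖² / 2` from the law of `(z, w)`, the cross term
`E ⟪g z, w⟫` being zero. With `f W z = V φ(W A z)` and `g = (f W₁ - f W₂) / σ`, the map
`(z, w) ↦ (A z, f W₂ z + σ w)` sends these two laws to those of the two networks, and can only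
decrease the divergence. Finally `‖f W₁ z - f W₂ z‖ ≤ ‖V‖ ‖(W₁ - W₂) A z‖` because `φ` is
`1`-Lipschitz, and `E ‖B z‖² = trace (B Bᵀ)` for every matrix `B`.
-/

open InformationTheory WithLp
open scoped NNReal ENNReal RealInnerProductSpace

section GeneralMeasures

variable {α β : Type*} [MeasurableSpace α] [MeasurableSpace β]

lemma map_prodMk_fst_eq_withDensity {μ : Measure α} {ρ : Measure β} [SFinite ρ]
    {T : α × β → β} (hT : Measurable T) {D : α × β → ℝ≥0∞} (hD : Measurable D)
    (h : ∀ x, ρ.map (fun y => T (x, y)) = ρ.withDensity fun y => D (x, y)) :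
    (μ.prod ρ).map (fun p => (p.1, T p)) = (μ.prod ρ).withDensity D := by
  have hshear : Measurable fun p : α × β => (p.1, T p) := by fun_prop
  refine Measure.ext_of_lintegral _ fun f hf => ?_
  rw [lintegral_map hf hshear,
    lintegral_prod (fun p : α × β => f (p.1, T p)) (hf.comp hshear).aemeasurable,
    lintegral_withDensity_eq_lintegral_mul _ hD hf, lintegral_prod _ (hD.mul hf).aemeasurable]
  refine lintegral_congr fun x => ?_
  have hfx : Measurable fun y => f (x, y) := by fun_prop
  calc ∫⁻ y, f (x, T (x, y)) ∂ρ
      = ∫⁻ y, f (x, y) ∂ρ.map (fun y => T (x, y)) := (lintegral_map hfx (by fun_prop)).symm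
    _ = ∫⁻ y, D (x, y) * f (x, y) ∂ρ := by
      rw [h, lintegral_withDensity_eq_lintegral_mul _ (by fun_prop) hfx]
      rfl

lemma klDiv_map_of_eq_withDensity_exp {μ : Measure α} [IsFiniteMeasure μ] {S : α → α}
    (hS : Measurable S) {f : α → ℝ} (hf : Measurable f)
    (hmap : μ.map S = μ.withDensity fun x => ENNReal.ofReal (Real.exp (f x)))
    (hint : Integrable (fun x => f (S x)) μ) :
    klDiv (μ.map S) μ = ENNReal.ofReal (∫ x, f (S x) ∂μ) := by
  have hac : μ.map S ≪ μ := hmap ▸ withDensity_absolutelyContinuous _ _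
  have hrnDeriv : (μ.map S).rnDeriv μ =ᵐ[μ] fun x => ENNReal.ofReal (Real.exp (f x)) :=
    hmap ▸ Measure.rnDeriv_withDensity μ hf.exp.ennreal_ofReal
  have hllr : llr (μ.map S) μ =ᵐ[μ.map S] f := by
    filter_upwards [hac.ae_eq hrnDeriv] with x hx
    rw [llr, hx, ENNReal.toReal_ofReal (Real.exp_nonneg _), Real.log_exp]
  have hint' : Integrable f (μ.map S) :=
    (integrable_map_measure hf.aestronglyMeasurable hS.aemeasurable).2 hint
  rw [klDiv_of_ac_of_integrable hac (hint'.congr hllr.symm), integral_congr_ae hllr,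
    integral_map hS.aemeasurable hf.aestronglyMeasurable]
  simp [measureReal_def, Measure.map_apply hS MeasurableSet.univ]

lemma klDivR_le_of_klDiv_le_ofReal {P Q : Measure α} [IsProbabilityMeasure P]
    [IsProbabilityMeasure Q] {c : ℝ} (hc : 0 ≤ c) (h : klDiv P Q ≤ ENNReal.ofReal c) :
    klDivR P Q ≤ c := by
  have hac : P ≪ Q := (klDiv_ne_top_iff.1 (ne_top_of_le_ne_top ENNReal.ofReal_ne_top h)).1
  calc klDivR P Q = (klDiv P Q).toReal := (toReal_klDiv_of_measure_eq hac (by simp)).symm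
    _ ≤ c := ENNReal.toReal_le_of_le_ofReal hc h

end GeneralMeasures

section StandardGaussian

lemma integrable_exp_strongDual_of_isGaussian {E : Type*} [NormedAddCommGroup E] [NormedSpace ℝ E]
    [MeasurableSpace E] [BorelSpace E] (μ : Measure E) [IsGaussian μ] (L : StrongDual ℝ E) :
    Integrable (fun x => Real.exp (L x)) μ := by
  have h : Integrable (fun t : ℝ => Real.exp (1 * t)) (μ.map L) := by
    rw [IsGaussian.map_eq_gaussianReal]
    exact integrable_exp_mul_gaussianReal 1
  simpa [Function.comp_def] using h.comp_measurable L.continuous.measurable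

variable {E : Type*} [NormedAddCommGroup E] [InnerProductSpace ℝ E] [FiniteDimensional ℝ E]
  [MeasurableSpace E] [BorelSpace E]

lemma integral_inner_sq_stdGaussian (v : E) : ∫ x, ⟪v, x⟫ ^ 2 ∂stdGaussian E = ‖v‖ ^ 2 := by
  have h := variance_dual_stdGaussian (innerSL ℝ v)
  rw [variance_of_integral_eq_zero (by fun_prop) (integral_strongDual_stdGaussian _)] at h
  simpa using h

lemma integral_cexp_inner_stdGaussian (m t : E) :
    ∫ x, Complex.exp (⟪m, x⟫ + ⟪x, t⟫ * Complex.I) ∂stdGaussian E =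
      Complex.exp ((‖m‖ ^ 2 - ‖t‖ ^ 2) / 2 + ⟪m, t⟫ * Complex.I) := by
  let b := stdOrthonormalBasis ℝ E
  let z := fun i => (⟪m, b i⟫ + ⟪b i, t⟫ * Complex.I : ℂ)
  have hz : ∑ i, z i ^ 2 / 2 = (‖m‖ ^ 2 - ‖t‖ ^ 2) / 2 + ⟪m, t⟫ * Complex.I := by
    rw [← Complex.ofReal_pow, ← Complex.ofReal_pow, ← real_inner_self_eq_norm_sq,
      ← real_inner_self_eq_norm_sq, ← b.sum_inner_mul_inner m m, ← b.sum_inner_mul_inner t t,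
      ← b.sum_inner_mul_inner m t]
    push_cast
    rw [← Finset.sum_sub_distrib, Finset.sum_div, Finset.sum_mul, ← Finset.sum_add_distrib]
    refine Finset.sum_congr rfl fun i _ => ?_
    rw [real_inner_comm m, real_inner_comm (b i) t]
    linear_combination (⟪b i, t⟫ : ℂ) ^ 2 / 2 * Complex.I_sq
  calc ∫ x, Complex.exp (⟪m, x⟫ + ⟪x, t⟫ * Complex.I) ∂stdGaussian E
      = ∫ y : Fin (Module.finrank ℝ E) → ℝ, ∏ i, Complex.exp (z i * y i)
          ∂Measure.pi fun _ => gaussianReal 0 1 := by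
        rw [stdGaussian, integral_map (Measurable.aemeasurable (by fun_prop))
          (Measurable.aestronglyMeasurable (by fun_prop))]
        congr with y
        rw [← Complex.exp_sum]
        congr 1
        simp only [z, b, inner_sum, sum_inner, real_inner_smul_left, real_inner_smul_right,
          Complex.ofReal_sum, Complex.ofReal_mul, Finset.sum_mul, ← Finset.sum_add_distrib]
        exact Finset.sum_congr rfl fun i _ => by ring
    _ = ∏ i, complexMGF id (gaussianReal 0 1) (z i) := by
        rw [integral_fintype_prod_eq_prod (f := fun i (u : ℝ) => Complex.exp (z i * u))]
        rfl
    _ = Complex.exp (∑ i, z i ^ 2 / 2) := by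
        simp [complexMGF_id_gaussianReal, Complex.exp_sum]
    _ = _ := by rw [hz]

lemma map_add_right_stdGaussian_eq_withDensity (m : E) :
    (stdGaussian E).map (· + m) =
      (stdGaussian E).withDensity fun x => ENNReal.ofReal (Real.exp (⟪m, x⟫ - ‖m‖ ^ 2 / 2)) := by
  have hexp : Integrable (fun x => Real.exp (⟪m, x⟫ - ‖m‖ ^ 2 / 2)) (stdGaussian E) := by
    simpa [Real.exp_sub] using
      (integrable_exp_strongDual_of_isGaussian (stdGaussian E) (innerSL ℝ m)).div_const _
  have := isFiniteMeasure_withDensity_ofReal hexp.2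
  refine Measure.ext_of_charFun (funext fun t => ?_)
  rw [charFun_map_add_const, charFun_stdGaussian, charFun_apply,
    integral_withDensity_eq_integral_toReal_smul (by fun_prop) (by simp)]
  calc _ = Complex.exp (-(‖m‖ ^ 2 / 2)) *
          Complex.exp ((‖m‖ ^ 2 - ‖t‖ ^ 2) / 2 + ⟪m, t⟫ * Complex.I) := by
        rw [← Complex.exp_add, ← Complex.exp_add]
        ring_nf
    _ = ∫ x, Complex.exp (-(‖m‖ ^ 2 / 2)) * Complex.exp (⟪m, x⟫ + ⟪x, t⟫ * Complex.I)
          ∂stdGaussian E := by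
        rw [integral_const_mul, integral_cexp_inner_stdGaussian]
    _ = _ := by
        refine integral_congr_ae (ae_of_all _ fun x => ?_)
        simp only [ENNReal.toReal_ofReal (Real.exp_nonneg _), Complex.real_smul, Complex.ofReal_exp,
          ← Complex.exp_add]
        push_cast
        ring_nf

lemma klDiv_map_add_stdGaussian {Ω : Type*} [MeasurableSpace Ω] {μ : Measure Ω}
    [IsFiniteMeasure μ] {g : Ω → E} (hg : Measurable g) (hg2 : MemLp g 2 μ) :
    klDiv ((μ.prod (stdGaussian E)).map fun p => (p.1, p.2 + g p.1)) (μ.prod (stdGaussian E)) =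
      ENNReal.ofReal ((∫ ω, ‖g ω‖ ^ 2 ∂μ) / 2) := by
  set γ := μ.prod (stdGaussian E)
  let f : Ω × E → ℝ := fun p => ⟪g p.1, p.2⟫ - ‖g p.1‖ ^ 2 / 2
  have hdensity : γ.map (fun p => (p.1, p.2 + g p.1)) =
      γ.withDensity fun p => ENNReal.ofReal (Real.exp (f p)) :=
    map_prodMk_fst_eq_withDensity (by fun_prop) (by fun_prop)
      fun ω => map_add_right_stdGaussian_eq_withDensity (g ω)
  have hf_shift : ∀ p : Ω × E, f (p.1, p.2 + g p.1) = ⟪g p.1, p.2⟫ + ‖g p.1‖ ^ 2 / 2 := fun p => by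
    simp only [f, inner_add_right, real_inner_self_eq_norm_sq]
    ring
  have hg1 : Integrable g μ := hg2.integrable one_le_two
  have hid : Integrable id (stdGaussian E) := IsGaussian.integrable_id
  have hcross : Integrable (fun p : Ω × E => ⟪g p.1, p.2⟫) γ :=
    hg1.op_fst_snd continuous_inner ⟨1, by simpa using norm_inner_le_norm (𝕜 := ℝ)⟩ hid
  have hcross0 : ∫ p : Ω × E, ⟪g p.1, p.2⟫ ∂γ = 0 :=
    (integral_prod_bilin (innerSL ℝ) hg1 hid).trans (by simp)
  have hsq : Integrable (fun p : Ω × E => ‖g p.1‖ ^ 2 / 2) γ :=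
    (hg2.integrable_norm_pow two_ne_zero).div_const 2 |>.comp_fst _
  rw [klDiv_map_of_eq_withDensity_exp (by fun_prop) (by fun_prop) hdensity
    ((hcross.add hsq).congr (ae_of_all _ fun p => (hf_shift p).symm))]
  simp only [hf_shift]
  rw [integral_add hcross hsq, hcross0, zero_add, integral_fun_fst fun ω => ‖g ω‖ ^ 2 / 2,
    integral_div]
  simp

end StandardGaussian

section Regression

variable {Ω 𝓧 F : Type*} [MeasurableSpace Ω] [MeasurableSpace 𝓧] [NormedAddCommGroup F]
  [InnerProductSpace ℝ F] [FiniteDimensional ℝ F] [MeasurableSpace F] [BorelSpace F]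
  {μ : Measure Ω}

/-- The law of the pair `(X, f + σ w)` of a feature `X` and a label with conditional mean `f` and
independent standard Gaussian noise `w`; both `X` and `f` are random variables on `(Ω, μ)`. -/
noncomputable def regressionLaw (μ : Measure Ω) (σ : ℝ) (X : Ω → 𝓧) (f : Ω → F) :
    Measure (𝓧 × F) :=
  (μ.prod (stdGaussian F)).map fun p => (X p.1, f p.1 + σ • p.2)

instance isFiniteMeasure_regressionLaw [IsFiniteMeasure μ] (σ : ℝ) (X : Ω → 𝓧) (f : Ω → F) :
    IsFiniteMeasure (regressionLaw μ σ X f) := by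
  unfold regressionLaw
  infer_instance

lemma klDiv_regressionLaw_le [IsFiniteMeasure μ] {σ : ℝ} (hσ : σ ≠ 0) {X : Ω → 𝓧}
    (hX : Measurable X) {f₁ f₂ : Ω → F} (hf₁ : Measurable f₁) (hf₂ : Measurable f₂)
    (hf : MemLp (fun ω => f₁ ω - f₂ ω) 2 μ) :
    klDiv (regressionLaw μ σ X f₁) (regressionLaw μ σ X f₂) ≤
      ENNReal.ofReal ((∫ ω, ‖f₁ ω - f₂ ω‖ ^ 2 ∂μ) / (2 * σ ^ 2)) := by
  let g : Ω → F := fun ω => σ⁻¹ • (f₁ ω - f₂ ω)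
  let T : Ω × F → 𝓧 × F := fun p => (X p.1, f₂ p.1 + σ • p.2)
  have hg : Measurable g := by fun_prop
  have hT : Measurable T := by fun_prop
  have hshift : regressionLaw μ σ X f₁ =
      ((μ.prod (stdGaussian F)).map fun p => (p.1, p.2 + g p.1)).map T := by
    rw [Measure.map_map hT (by fun_prop), regressionLaw]
    congr with p : 2
    · rfl
    · simp only [T, g, Function.comp_apply, smul_add, smul_inv_smul₀ hσ]
      abel
  calc klDiv (regressionLaw μ σ X f₁) (regressionLaw μ σ X f₂)
      ≤ ENNReal.ofReal ((∫ ω, ‖g ω‖ ^ 2 ∂μ) / 2) := by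
        rw [hshift, ← klDiv_map_add_stdGaussian hg (hf.const_smul σ⁻¹)]
        exact klDiv_map_le _ _ hT
    _ = ENNReal.ofReal ((∫ ω, ‖f₁ ω - f₂ ω‖ ^ 2 ∂μ) / (2 * σ ^ 2)) := by
        simp only [g, norm_smul, norm_inv, mul_pow, integral_const_mul, Real.norm_eq_abs,
          inv_pow, sq_abs]
        congr 1
        field_simp

lemma klDiv_regressionLaw_comp_le {E : Type*} [NormedAddCommGroup E] [MeasurableSpace E]
    [OpensMeasurableSpace E] [IsFiniteMeasure μ] {σ : ℝ} (hσ : σ ≠ 0) {X : Ω → 𝓧}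
    (hX : Measurable X) {K : ℝ≥0} {h : E → F} (hh : LipschitzWith K h) {Y₁ Y₂ : Ω → E}
    (hY₁ : Measurable Y₁) (hY₂ : Measurable Y₂) (hY : MemLp (fun ω => Y₁ ω - Y₂ ω) 2 μ) :
    klDiv (regressionLaw μ σ X (h ∘ Y₁)) (regressionLaw μ σ X (h ∘ Y₂)) ≤
      ENNReal.ofReal (K ^ 2 * (∫ ω, ‖Y₁ ω - Y₂ ω‖ ^ 2 ∂μ) / (2 * σ ^ 2)) := by
  have hm := hh.continuous.measurable
  have hle : ∀ ω, ‖h (Y₁ ω) - h (Y₂ ω)‖ ≤ K * ‖Y₁ ω - Y₂ ω‖ := fun ω => hh.norm_sub_le _ _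
  have hf : MemLp (fun ω => h (Y₁ ω) - h (Y₂ ω)) 2 μ :=
    hY.of_le_mul (Measurable.aestronglyMeasurable (by fun_prop)) (ae_of_all _ hle)
  refine (klDiv_regressionLaw_le hσ hX (hm.comp hY₁) (hm.comp hY₂) hf).trans ?_
  rw [← integral_const_mul]
  gcongr ENNReal.ofReal (?_ / _)
  refine integral_mono (hf.integrable_norm_pow two_ne_zero)
    ((hY.integrable_norm_pow two_ne_zero).const_mul _) fun ω => ?_
  simpa [mul_pow] using pow_le_pow_left₀ (norm_nonneg _) (hle ω) 2

end Regression

section Matrices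

variable {m n ι : Type*} [Fintype m] [Fintype n] [Fintype ι]

lemma lipschitzWith_relu : LipschitzWith 1 relu :=
  LipschitzWith.id.max_const 0

lemma lipschitzWith_toLp_comp_ofLp {K : ℝ≥0} {φ : ℝ → ℝ} (hφ : LipschitzWith K φ) :
    LipschitzWith K fun x : EuclideanSpace ℝ ι => toLp 2 (φ ∘ ofLp x) := by
  refine LipschitzWith.of_dist_le_mul fun x y => ?_
  rw [EuclideanSpace.dist_eq, EuclideanSpace.dist_eq]
  refine Real.sqrt_le_iff.2 ⟨by positivity, ?_⟩
  rw [mul_pow, Real.sq_sqrt (by positivity), Finset.mul_sum]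
  refine Finset.sum_le_sum fun i _ => ?_
  rw [← mul_pow]
  exact pow_le_pow_left₀ dist_nonneg (hφ.dist_le_mul _ _) 2

open scoped Matrix.Norms.L2Operator in
lemma opNorm_eq_l2_opNorm {k l : ℕ} (V : Matrix (Fin k) (Fin l) ℝ) : opNorm V = ‖V‖ := by
  rw [l2_opNorm_def, ← ContinuousLinearMap.sSup_sphere_eq_norm, opNorm]
  congr 1
  ext r
  constructor
  · rintro ⟨u, hu, rfl⟩
    exact ⟨toLp 2 u, by simp [EuclideanSpace.norm_eq, hu], by simp [EuclideanSpace.norm_eq]⟩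
  · rintro ⟨u, hu, rfl⟩
    exact ⟨ofLp u, by simp [← EuclideanSpace.real_norm_sq_eq, mem_sphere_zero_iff_norm.1 hu],
      by simp [EuclideanSpace.norm_eq]⟩

lemma memLp_toLp_mulVec_stdGaussian (B : Matrix m n ℝ) :
    MemLp (fun z => toLp 2 (B *ᵥ ofLp z)) 2 (stdGaussian (EuclideanSpace ℝ n)) := by
  classical
  exact (toEuclideanLin B).toContinuousLinearMap.comp_memLp' IsGaussian.memLp_two_id

lemma integral_norm_sq_toLp_mulVec_stdGaussian (B : Matrix m n ℝ) :
    ∫ z, ‖toLp 2 (B *ᵥ ofLp z)‖ ^ 2 ∂stdGaussian (EuclideanSpace ℝ n) = (B * Bᵀ).trace := by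
  have hrow : ∀ i (z : EuclideanSpace ℝ n), (B *ᵥ ofLp z) i = ⟪toLp 2 (B.row i), z⟫ := fun i z => by
    simp [mulVec, dotProduct, PiLp.inner_apply, mul_comm]
  have hint : ∀ v : EuclideanSpace ℝ n,
      Integrable (fun z => ⟪v, z⟫ ^ 2) (stdGaussian (EuclideanSpace ℝ n)) := fun v =>
    (IsGaussian.memLp_dual _ (innerSL ℝ v) 2 (by simp)).integrable_sq
  simp_rw [EuclideanSpace.real_norm_sq_eq, hrow]
  rw [integral_finsetSum _ fun i _ => hint _]
  simp_rw [integral_inner_sq_stdGaussian, EuclideanSpace.real_norm_sq_eq]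
  simp [trace, mul_apply, sq]

end Matrices

section Network

variable {d n k l : Type*} [Fintype d] [Fintype n] [Fintype k] [Fintype l]

/-- The law of `(A z, V φ(W A z) + σ w)` for a standard Gaussian vector `(z, w)` and an arbitrary
activation function `φ`; the latent dimension of `z` may differ from that of the feature `A z`. -/
noncomputable def networkLaw (φ : ℝ → ℝ) (σ : ℝ) (V : Matrix k l ℝ) (A : Matrix d n ℝ)
    (W : Matrix l d ℝ) : Measure ((d → ℝ) × (k → ℝ)) :=
  ((Measure.pi fun _ : n => gaussianReal 0 1).prod (Measure.pi fun _ : k => gaussianReal 0 1)).map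
    fun zw => (A *ᵥ zw.1, V *ᵥ (fun j => φ ((W *ᵥ (A *ᵥ zw.1)) j)) + σ • zw.2)

lemma nnLaw_eq_networkLaw {d k l : ℕ} (σ : ℝ) (V : Matrix (Fin k) (Fin l) ℝ)
    (A : Matrix (Fin d) (Fin d) ℝ) (W : Matrix (Fin l) (Fin d) ℝ) :
    nnLaw d k l σ V A W = networkLaw relu σ V A W := rfl

/-- The map `x ↦ V φ(x)` on Euclidean spaces, `φ` acting coordinatewise: the mean of the label as a
function of the pre-activation `x = W A z`. -/
noncomputable def outputLayer (φ : ℝ → ℝ) (V : Matrix k l ℝ) (x : EuclideanSpace ℝ l) :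
    EuclideanSpace ℝ k :=
  toLp 2 (V *ᵥ (φ ∘ ofLp x))

open scoped Matrix.Norms.L2Operator in
lemma lipschitzWith_outputLayer [DecidableEq l] {K : ℝ≥0} {φ : ℝ → ℝ} (hφ : LipschitzWith K φ)
    (V : Matrix k l ℝ) : LipschitzWith (‖V‖₊ * K) (outputLayer φ V) := by
  refine LipschitzWith.of_dist_le_mul fun x y => ?_
  let ψ (x : EuclideanSpace ℝ l) : EuclideanSpace ℝ l := toLp 2 (φ ∘ ofLp x)
  calc dist (outputLayer φ V x) (outputLayer φ V y)
      = ‖toLp 2 (V *ᵥ ofLp (ψ x - ψ y))‖ := by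
        rw [dist_eq_norm, ofLp_sub, mulVec_sub, toLp_sub]
        rfl
    _ ≤ ‖V‖ * dist (ψ x) (ψ y) := by
        rw [dist_eq_norm]
        exact l2_opNorm_mulVec V (ψ x - ψ y)
    _ ≤ ‖V‖ * (K * dist x y) := by
        gcongr
        exact (lipschitzWith_toLp_comp_ofLp hφ).dist_le_mul x y
    _ = (‖V‖₊ * K : ℝ≥0) * dist x y := by
        rw [NNReal.coe_mul, coe_nnnorm, mul_assoc]

lemma networkLaw_eq_map_regressionLaw {φ : ℝ → ℝ} (hφ : Continuous φ) (σ : ℝ)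
    (V : Matrix k l ℝ) (A : Matrix d n ℝ) (W : Matrix l d ℝ) :
    networkLaw φ σ V A W =
      (regressionLaw (stdGaussian (EuclideanSpace ℝ n)) σ (fun z => A *ᵥ ofLp z)
        (outputLayer φ V ∘ fun z => toLp 2 ((W * A) *ᵥ ofLp z))).map (Prod.map id ofLp) := by
  have hmeas : Measurable fun p : EuclideanSpace ℝ n × EuclideanSpace ℝ k =>
      (A *ᵥ ofLp p.1, (outputLayer φ V ∘ fun z => toLp 2 ((W * A) *ᵥ ofLp z)) p.1 + σ • p.2) := by
    unfold outputLayer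
    fun_prop
  rw [regressionLaw, ← map_pi_eq_stdGaussian, ← map_pi_eq_stdGaussian,
    Measure.map_prod_map _ _ (by fun_prop) (by fun_prop), Measure.map_map (by fun_prop) hmeas,
    Measure.map_map (by fun_prop) (by fun_prop), networkLaw]
  simp [Function.comp_def, outputLayer]

open scoped Matrix.Norms.L2Operator in
theorem klDiv_nn_model_le_general [DecidableEq l] {K : ℝ≥0} {φ : ℝ → ℝ} (hφ : LipschitzWith K φ)
    {σ : ℝ} (hσ : σ ≠ 0) (V : Matrix k l ℝ) (A : Matrix d n ℝ) (W₁ W₂ : Matrix l d ℝ) :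
    klDiv (networkLaw φ σ V A W₁) (networkLaw φ σ V A W₂) ≤ ENNReal.ofReal
      ((‖V‖ * K) ^ 2 * ((W₁ - W₂) * (A * Aᵀ) * (W₁ - W₂)ᵀ).trace / (2 * σ ^ 2)) := by
  let Y (W : Matrix l d ℝ) (z : EuclideanSpace ℝ n) : EuclideanSpace ℝ l :=
    toLp 2 ((W * A) *ᵥ ofLp z)
  have hY : ∀ W, Measurable (Y W) := fun W => by fun_prop
  have hdiff : ∀ z, Y W₁ z - Y W₂ z = toLp 2 (((W₁ - W₂) * A) *ᵥ ofLp z) := fun z => by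
    simp [Y, Matrix.sub_mul, sub_mulVec]
  have hsq : ∫ z, ‖Y W₁ z - Y W₂ z‖ ^ 2 ∂stdGaussian (EuclideanSpace ℝ n) =
      ((W₁ - W₂) * (A * Aᵀ) * (W₁ - W₂)ᵀ).trace := by
    simp_rw [hdiff, integral_norm_sq_toLp_mulVec_stdGaussian, transpose_mul, Matrix.mul_assoc]
  have hmemLp : MemLp (fun z => Y W₁ z - Y W₂ z) 2 (stdGaussian (EuclideanSpace ℝ n)) := by
    simpa only [hdiff] using memLp_toLp_mulVec_stdGaussian ((W₁ - W₂) * A)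
  calc klDiv (networkLaw φ σ V A W₁) (networkLaw φ σ V A W₂)
      ≤ klDiv (regressionLaw _ σ (fun z => A *ᵥ ofLp z) (outputLayer φ V ∘ Y W₁))
          (regressionLaw _ σ (fun z => A *ᵥ ofLp z) (outputLayer φ V ∘ Y W₂)) := by
        simp only [networkLaw_eq_map_regressionLaw hφ.continuous]
        exact klDiv_map_le _ _ (by fun_prop)
    _ ≤ _ := by
        rw [← hsq]
        exact klDiv_regressionLaw_comp_le hσ (by fun_prop) (lipschitzWith_outputLayer hφ V)
          (hY W₁) (hY W₂) hmemLp

end Network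

instance isProbabilityMeasure_nnLaw (d k l : ℕ) (σ : ℝ) (V : Matrix (Fin k) (Fin l) ℝ)
    (A : Matrix (Fin d) (Fin d) ℝ) (W : Matrix (Fin l) (Fin d) ℝ) :
    IsProbabilityMeasure (nnLaw d k l σ V A W) := by
  have := lipschitzWith_relu.continuous
  exact Measure.isProbabilityMeasure_map (Measurable.aemeasurable (by fun_prop))

/-- KL divergence bound between the joint laws of features and labels in the
one-hidden layer neural network model with fixed hidden-to-output layer `V`. -/
theorem klDiv_nn_model_le (d k l : ℕ) (hd : 1 ≤ d) (hk : 1 ≤ k) (hl : 1 ≤ l)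
    (σ : ℝ) (hσ : 0 < σ) (V : Matrix (Fin k) (Fin l) ℝ)
    (SigS A : Matrix (Fin d) (Fin d) ℝ)
    (hSigS : SigS.PosSemidef) (hA : A * Aᵀ = SigS)
    (W1 W2 : Matrix (Fin l) (Fin d) ℝ) :
    klDivR (nnLaw d k l σ V A W1) (nnLaw d k l σ V A W2) ≤
      opNorm V ^ 2 * ((W1 - W2) * SigS * (W1 - W2)ᵀ).trace / (2 * σ ^ 2) := by
  subst hA
  rw [opNorm_eq_l2_opNorm]
  refine klDivR_le_of_klDiv_le_ofReal ?_ ?_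
  · have := (hSigS.mul_mul_conjTranspose_same (W1 - W2)).trace_nonneg
    rw [conjTranspose_eq_transpose_of_trivial] at this
    positivity
  · simpa [nnLaw_eq_networkLaw] using klDiv_nn_model_le_general lipschitzWith_relu hσ.ne' V A W1 W2
end

section
/- In the linear transfer learning model (d, k ≥ 1, σ > 0, Σ_T ∈ ℝ^{d×d} positive definite with A_T A_Tᵀ = Σ_T; for W ∈ ℝ^{k×d}, Q_W is the law on ℝ^d × ℝ^k of (A_T z, W A_T z + σ w) with (z, w) a standard Gaussian vector in ℝ^{d+k}; P_W the analogous source law with positive semidefinite Σ_S; ρ(W₁, W₂) := √(trace((W₁ − W₂) Σ_T (W₁ − W₂)ᵀ)); D := d·k − 1), assume D ≥ 20, n_S, n_T ≥ 1, and 0 < Δ < √(σ²D·log 2 / n_T). Then for every measurable estimator Ŵ : ((ℝ^d × ℝ^k)^{n_S}) × ((ℝ^d × ℝ^k)^{n_T}) → ℝ^{k×d}, the supremum over all pairs (W_S, W_T) with ρ(W_S, W_T) ≤ Δ of E_{s ∼ P_{W_S}^{⊗n_S}, t ∼ Q_{W_T}^{⊗n_T}}[ ρ(Ŵ(s,t),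 W_T)² ] is at least (1/100)·Δ²·(1 − 0.8·n_T Δ² / (σ²D)). -/
open MeasureTheory ProbabilityTheory Matrix

/-- The transfer distance `ρ(W₁, W₂) = ‖Σ_T^{1/2}(W₁ − W₂)ᵀ‖_F`. -/
noncomputable def rho {k d : ℕ} (SigT : Matrix (Fin d) (Fin d) ℝ)
    (W1 W2 : Matrix (Fin k) (Fin d) ℝ) : ℝ :=
  Real.sqrt ((W1 - W2) * SigT * (W1 - W2)ᵀ).trace

/-- The joint law of `(A z, W A z + σ w)` where `(z, w)` is a standard Gaussian vector in
`ℝ^{d+k}`. -/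
noncomputable def linLaw (d k : ℕ) (σ : ℝ) (A : Matrix (Fin d) (Fin d) ℝ)
    (W : Matrix (Fin k) (Fin d) ℝ) : Measure ((Fin d → ℝ) × (Fin k → ℝ)) :=
  Measure.map
    (fun zw : (Fin d → ℝ) × (Fin k → ℝ) =>
      (A.mulVec zw.1, W.mulVec (A.mulVec zw.1) + σ • zw.2))
    ((Measure.pi fun _ : Fin d => gaussianReal 0 1).prod
      (Measure.pi fun _ : Fin k => gaussianReal 0 1))

/-!
Assouad's method, with the testing affinity `∫ min(dμ, dν)` as the measure of indistinguishability.
The source sample is made uninformative by freezing the source parameter at a centre `W₀`. Around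
it, place the vertices `W₀ + δ s A⁻¹`, one for each sign matrix `s`, with `d k δ² = Δ²`. Since
`ρ(W, W')` is the Frobenius norm of `(W - W') A`, all vertices are at distance exactly `Δ` from
`W₀`, and estimating `W` means estimating the signs of the `d k` entries of `δ s` separately.

Two vertices differing in one sign are at squared distance `4 δ²`. Given `z`, replacing `W` by `W'`
only translates the Gaussian noise by `σ⁻¹ (W' - W) A z`, so `n` observations have Kullback–Leibler
divergence `n ρ(W, W')² / (2 σ²) = 2 n δ² / σ²`, and by the Bretagnolle–Huber inequality their
affinity is at least `exp (-2 n δ² / σ²) / 2`. Each entry then contributes at least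
`δ² exp (-2 n δ² / σ²) / 2` to the risk at some common vertex.
-/

section TestAffinity

variable {𝒳 𝒴 : Type*} [MeasurableSpace 𝒳] [MeasurableSpace 𝒴]

/-- The testing affinity `∫ min(dμ, dν)` of two measures, that is, the total mass of their lattice
infimum. For probability measures it is `1` minus the total variation distance, the least sum of
the two error probabilities of a test between `μ` and `ν`. -/
noncomputable def testAffinity (μ ν : Measure 𝒳) : ENNReal := (μ ⊓ ν) Set.univ

lemma mul_testAffinity_le_lintegral_add_lintegral {μ ν : Measure 𝒳} {f g : 𝒳 → ENNReal}
    {C : ENNReal} (hf : Measurable f) (hC : ∀ x, C ≤ f x + g x) :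
    C * testAffinity μ ν ≤ ∫⁻ x, f x ∂μ + ∫⁻ x, g x ∂ν := by
  calc C * testAffinity μ ν = ∫⁻ _, C ∂(μ ⊓ ν) := (lintegral_const C).symm
    _ ≤ ∫⁻ x, f x + g x ∂(μ ⊓ ν) := lintegral_mono hC
    _ = ∫⁻ x, f x ∂(μ ⊓ ν) + ∫⁻ x, g x ∂(μ ⊓ ν) := lintegral_add_left hf g
    _ ≤ ∫⁻ x, f x ∂μ + ∫⁻ x, g x ∂ν :=
      add_le_add (lintegral_mono' inf_le_left le_rfl) (lintegral_mono' inf_le_right le_rfl)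

lemma half_sq_sub_mul_testAffinity_le (μ ν : Measure 𝒳) {t : 𝒳 → ℝ} (ht : Measurable t)
    (a b : ℝ) :
    ENNReal.ofReal ((a - b) ^ 2 / 2) * testAffinity μ ν ≤
      ∫⁻ x, ENNReal.ofReal ((t x - a) ^ 2) ∂μ + ∫⁻ x, ENNReal.ofReal ((t x - b) ^ 2) ∂ν := by
  refine mul_testAffinity_le_lintegral_add_lintegral (by fun_prop) fun x => ?_
  rw [← ENNReal.ofReal_add (sq_nonneg _) (sq_nonneg _)]
  exact ENNReal.ofReal_le_ofReal (by linarith [sq_nonneg ((t x - a) + (t x - b))])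

lemma testAffinity_le_map {T : 𝒳 → 𝒴} (hT : Measurable T) (μ ν : Measure 𝒳) :
    testAffinity μ ν ≤ testAffinity (μ.map T) (ν.map T) := by
  calc testAffinity μ ν = (μ ⊓ ν).map T Set.univ := by
        rw [Measure.map_apply hT .univ, Set.preimage_univ, testAffinity]
    _ ≤ testAffinity (μ.map T) (ν.map T) :=
        le_inf (Measure.map_mono inf_le_left hT) (Measure.map_mono inf_le_right hT) _

lemma testAffinity_le_prod (ρ : Measure 𝒳) [IsProbabilityMeasure ρ] (μ ν : Measure 𝒴)
    [IsFiniteMeasure μ] [SFinite ν] :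
    testAffinity μ ν ≤ testAffinity (ρ.prod μ) (ρ.prod ν) := by
  have : IsFiniteMeasure (μ ⊓ ν) := isFiniteMeasure_of_le μ inf_le_left
  calc testAffinity μ ν = (ρ.prod (μ ⊓ ν)) Set.univ := by
        rw [← Set.univ_prod_univ, Measure.prod_prod, measure_univ, one_mul, testAffinity]
    _ ≤ testAffinity (ρ.prod μ) (ρ.prod ν) :=
        le_inf (Measure.prod_mono le_rfl inf_le_left) (Measure.prod_mono le_rfl inf_le_right) _

lemma testAffinity_pi_le_map {ι : Type*} [Fintype ι] {T : 𝒳 → 𝒴} (hT : Measurable T)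
    (μ ν : Measure 𝒳) [IsProbabilityMeasure μ] [IsProbabilityMeasure ν] :
    testAffinity (Measure.pi fun _ : ι => μ) (Measure.pi fun _ : ι => ν) ≤
      testAffinity (Measure.pi fun _ : ι => μ.map T) (Measure.pi fun _ : ι => ν.map T) := by
  have pi_map (η : Measure 𝒳) [IsProbabilityMeasure η] :
      (Measure.pi fun _ : ι => η).map (fun x i => T (x i)) = Measure.pi fun _ => η.map T := by
    have : IsProbabilityMeasure (η.map T) := Measure.isProbabilityMeasure_map hT.aemeasurable
    exact Measure.pi_map_pi (f := fun _ => T) fun _ => hT.aemeasurable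
  rw [← pi_map, ← pi_map]
  exact testAffinity_le_map (by fun_prop) _ _

-- For `l` of mean `K` with `exp l` of mean `1`, integrating this replaces Cauchy–Schwarz and Jensen
-- in the usual proof of the Bretagnolle–Huber inequality.
lemma exp_mul_le_min_one_exp (K l : ℝ) :
    Real.exp K * (1 + (l - K) / 2 - (1 + Real.exp l) / 4) ≤ min 1 (Real.exp l) := by
  set s := Real.exp (K / 2)
  set r := Real.exp (l / 2)
  have hs : Real.exp K = s ^ 2 := by rw [← Real.exp_nat_mul]; ring_nf
  have hr : Real.exp l = r ^ 2 := by rw [← Real.exp_nat_mul]; ring_nf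
  have tangent : s * (1 + (l - K) / 2) ≤ r := by
    calc s * (1 + (l - K) / 2) ≤ s * Real.exp ((l - K) / 2) := by
          gcongr
          linarith [Real.add_one_le_exp ((l - K) / 2)]
      _ = r := by
          rw [← Real.exp_add]
          congr 1
          ring
  rw [hs, hr]
  calc s ^ 2 * (1 + (l - K) / 2 - (1 + r ^ 2) / 4)
      = s * (s * (1 + (l - K) / 2)) - s ^ 2 * (1 + r ^ 2) / 4 := by ring
    _ ≤ s * r - s ^ 2 * (1 + r ^ 2) / 4 := by gcongr
    _ ≤ min 1 (r ^ 2) := le_min (by nlinarith [sq_nonneg (s * r - 2)])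
        (by nlinarith [sq_nonneg (s - 2 * r), sq_nonneg (s * r)])

/-- The Bretagnolle–Huber inequality: `-∫ l ∂μ` is the Kullback–Leibler divergence of `μ` from the
measure of density `exp l`. -/
lemma exp_integral_div_two_le_testAffinity_withDensity {μ : Measure 𝒳} [IsProbabilityMeasure μ]
    {l : 𝒳 → ℝ} (hl : Integrable l μ)
    [IsProbabilityMeasure (μ.withDensity fun x => ENNReal.ofReal (Real.exp (l x)))] :
    ENNReal.ofReal (Real.exp (∫ x, l x ∂μ) / 2) ≤
      testAffinity μ (μ.withDensity fun x => ENNReal.ofReal (Real.exp (l x))) := by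
  set ν := μ.withDensity fun x => ENNReal.ofReal (Real.exp (l x)) with hν
  set K := ∫ x, l x ∂μ
  have mass : ∫⁻ x, ENNReal.ofReal (Real.exp (l x)) ∂μ = 1 := by
    rw [← setLIntegral_univ, ← withDensity_apply _ .univ, ← hν, measure_univ]
  have exp_int : Integrable (fun x => Real.exp (l x)) μ :=
    (lintegral_ofReal_ne_top_iff_integrable
      (Real.continuous_exp.comp_aestronglyMeasurable hl.aestronglyMeasurable)
      (ae_of_all _ fun x => (Real.exp_pos _).le)).mp (mass.trans_ne ENNReal.one_ne_top)
  have exp_integral : ∫ x, Real.exp (l x) ∂μ = 1 := by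
    rw [integral_eq_lintegral_of_nonneg_ae (ae_of_all _ fun x => (Real.exp_pos _).le)
      exp_int.aestronglyMeasurable, mass, ENNReal.toReal_one]
  have min_int : Integrable (fun x => min 1 (Real.exp (l x))) μ := (integrable_const 1).inf exp_int
  calc ENNReal.ofReal (Real.exp K / 2)
      = ENNReal.ofReal (∫ x, Real.exp K * (1 + (l x - K) / 2 - (1 + Real.exp (l x)) / 4) ∂μ) := by
        rw [integral_const_mul, integral_sub (by fun_prop) (by fun_prop),
          integral_add (by fun_prop) (by fun_prop), integral_div, integral_div,
          integral_sub hl (by fun_prop), integral_add (by fun_prop) exp_int, exp_integral]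
        simp only [integral_const, probReal_univ, smul_eq_mul, one_mul]
        congr 1
        ring
    _ ≤ ENNReal.ofReal (∫ x, min 1 (Real.exp (l x)) ∂μ) :=
        ENNReal.ofReal_le_ofReal
          (integral_mono (by fun_prop) min_int fun x => exp_mul_le_min_one_exp K (l x))
    _ = (μ.withDensity fun x => ENNReal.ofReal (min 1 (Real.exp (l x)))) Set.univ := by
        rw [withDensity_apply _ .univ, setLIntegral_univ,
          ofReal_integral_eq_lintegral_ofReal min_int
            (ae_of_all _ fun x => le_min zero_le_one (Real.exp_pos _).le)]
    _ ≤ testAffinity μ ν := by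
        refine le_inf (α := Measure 𝒳) ?_ (withDensity_mono (ae_of_all _ fun x =>
          ENNReal.ofReal_le_ofReal (min_le_right _ _))) _
        calc (μ.withDensity fun x => ENNReal.ofReal (min 1 (Real.exp (l x))))
            ≤ μ.withDensity 1 := withDensity_mono (ae_of_all _ fun x => by simp)
          _ = μ := withDensity_one

end TestAffinity

section Product

variable {ι : Type*} [Fintype ι]

section Family

variable {X : ι → Type*} [∀ i, MeasurableSpace (X i)] (μ : ∀ i, Measure (X i))
  [∀ i, IsProbabilityMeasure (μ i)]

lemma lintegral_pi_prod {f : ∀ i, X i → ENNReal} (hf : ∀ i, Measurable (f i)) :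
    ∫⁻ x, ∏ i, f i (x i) ∂(Measure.pi μ) = ∏ i, ∫⁻ x, f i x ∂(μ i) := by
  have indep : iIndepFun (fun i (x : ∀ i, X i) => f i (x i)) (Measure.pi μ) :=
    iIndepFun_pi fun i => (hf i).aemeasurable
  rw [lintegral_prod_eq_prod_lintegral_of_indepFun _ _ indep (by fun_prop)]
  exact Finset.prod_congr rfl fun i _ => (measurePreserving_eval μ i).lintegral_comp (hf i)

lemma pi_withDensity {f : ∀ i, X i → ENNReal} (hf : ∀ i, Measurable (f i))
    [∀ i, SigmaFinite ((μ i).withDensity (f i))] :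
    Measure.pi (fun i => (μ i).withDensity (f i)) =
      (Measure.pi μ).withDensity fun x => ∏ i, f i (x i) := by
  classical
  refine Measure.pi_eq fun s hs => ?_
  have indicator_prod : (Set.univ.pi s).indicator (fun x => ∏ i, f i (x i)) =
      fun x => ∏ i, (s i).indicator (f i) (x i) := by
    ext x
    simp [Set.indicator_apply, Finset.prod_ite_zero]
  rw [withDensity_apply _ (.univ_pi hs), ← lintegral_indicator (.univ_pi hs), indicator_prod,
    lintegral_pi_prod μ fun i => (hf i).indicator (hs i)]
  exact Finset.prod_congr rfl fun i _ => by
    rw [lintegral_indicator (hs i), withDensity_apply _ (hs i)]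

lemma pi_withDensity_exp {l : ∀ i, X i → ℝ} (hl : ∀ i, Measurable (l i))
    [∀ i, SigmaFinite ((μ i).withDensity fun x => ENNReal.ofReal (Real.exp (l i x)))] :
    Measure.pi (fun i => (μ i).withDensity fun x => ENNReal.ofReal (Real.exp (l i x))) =
      (Measure.pi μ).withDensity fun x => ENNReal.ofReal (Real.exp (∑ i, l i (x i))) := by
  rw [pi_withDensity μ (by fun_prop)]
  simp only [Real.exp_sum, ENNReal.ofReal_prod_of_nonneg fun _ _ => (Real.exp_pos _).le]

end Family

lemma exp_card_mul_integral_div_two_le_testAffinity_pi {X : Type*} [MeasurableSpace X]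
    {μ : Measure X} [IsProbabilityMeasure μ] {l : X → ℝ} (hl : Measurable l)
    (hl_int : Integrable l μ)
    [IsProbabilityMeasure (μ.withDensity fun x => ENNReal.ofReal (Real.exp (l x)))] :
    ENNReal.ofReal (Real.exp (Fintype.card ι * ∫ x, l x ∂μ) / 2) ≤
      testAffinity (Measure.pi fun _ : ι => μ)
        (Measure.pi fun _ : ι => μ.withDensity fun x => ENNReal.ofReal (Real.exp (l x))) := by
  have density := pi_withDensity_exp (fun _ : ι => μ) fun _ => hl
  have : IsProbabilityMeasure ((Measure.pi fun _ : ι => μ).withDensity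
      fun x => ENNReal.ofReal (Real.exp (∑ i, l (x i)))) := density ▸ inferInstance
  have sum_int : Integrable (fun x : ι → X => ∑ i, l (x i)) (Measure.pi fun _ => μ) :=
    integrable_finsetSum _ fun i _ => integrable_comp_eval hl_int
  have sum_integral : ∫ x : ι → X, ∑ i, l (x i) ∂(Measure.pi fun _ => μ) =
      Fintype.card ι * ∫ x, l x ∂μ := by
    rw [integral_finsetSum _ fun i _ => integrable_comp_eval hl_int]
    simp [integral_comp_eval (μ := fun _ : ι => μ) hl_int.aestronglyMeasurable]
  rw [density, ← sum_integral]
  exact exp_integral_div_two_le_testAffinity_withDensity sum_int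

end Product

section Gaussian

variable {ι : Type*} [Fintype ι]

/-- The standard Gaussian law on `ι → ℝ`, as a product of standard normal laws. -/
noncomputable abbrev stdGaussianPi (ι : Type*) [Fintype ι] : Measure (ι → ℝ) :=
  Measure.pi fun _ => gaussianReal 0 1

lemma memLp_eval_stdGaussianPi (i : ι) : MemLp (fun z : ι → ℝ => z i) 2 (stdGaussianPi ι) :=
  (memLp_id_gaussianReal 2).comp_measurePreserving (measurePreserving_eval _ i)

lemma integral_eval_stdGaussianPi (i : ι) : ∫ z, z i ∂(stdGaussianPi ι) = 0 :=
  (integral_comp_eval (μ := fun _ : ι => gaussianReal 0 1) (f := id) (by fun_prop)).trans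
    integral_id_gaussianReal

lemma memLp_dotProduct_stdGaussianPi (b : ι → ℝ) :
    MemLp (fun z => b ⬝ᵥ z) 2 (stdGaussianPi ι) :=
  memLp_finsetSum _ fun i _ => (memLp_eval_stdGaussianPi i).const_mul (b i)

lemma integral_dotProduct_sq_stdGaussianPi (b : ι → ℝ) :
    ∫ z, (b ⬝ᵥ z) ^ 2 ∂(stdGaussianPi ι) = ∑ i, b i ^ 2 := by
  have mean_zero : ∫ z, b ⬝ᵥ z ∂(stdGaussianPi ι) = 0 := by
    simp only [dotProduct]
    rw [integral_finsetSum _ fun i _ =>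
      ((memLp_eval_stdGaussianPi i).integrable one_le_two).const_mul (b i)]
    simp [integral_const_mul, integral_eval_stdGaussianPi]
  calc ∫ z, (b ⬝ᵥ z) ^ 2 ∂(stdGaussianPi ι)
      = Var[fun z => b ⬝ᵥ z; stdGaussianPi ι] :=
        (variance_of_integral_eq_zero (by fun_prop) mean_zero).symm
    _ = Var[∑ i, fun z => b i * z i; stdGaussianPi ι] := by
        congr 1 with z
        simp only [dotProduct, Finset.sum_apply]
    _ = ∑ i, Var[fun x => b i * x; gaussianReal 0 1] :=
        variance_sum_pi (X := fun i x => b i * x) fun i => (memLp_id_gaussianReal 2).const_mul (b i)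
    _ = ∑ i, b i ^ 2 := Finset.sum_congr rfl fun i _ => by
        rw [variance_const_mul (b i) fun x => x, variance_fun_id_gaussianReal, NNReal.coe_one,
          mul_one]

lemma gaussianReal_one_eq_withDensity (m : ℝ) : gaussianReal m 1 =
    (gaussianReal 0 1).withDensity fun x => ENNReal.ofReal (Real.exp (m * x - m ^ 2 / 2)) := by
  rw [gaussianReal_of_var_ne_zero _ one_ne_zero, gaussianReal_of_var_ne_zero _ one_ne_zero,
    ← withDensity_mul _ (by fun_prop) (by fun_prop)]
  congr 1 with x
  simp only [Pi.mul_apply, gaussianPDF, gaussianPDFReal]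
  rw [← ENNReal.ofReal_mul (by positivity), mul_assoc _ (Real.exp _), ← Real.exp_add]
  congr 3
  simp only [NNReal.coe_one]
  ring

lemma stdGaussianPi_map_add (v : ι → ℝ) : (stdGaussianPi ι).map (· + v) =
    (stdGaussianPi ι).withDensity
      fun w => ENNReal.ofReal (Real.exp (∑ i, (v i * w i - v i ^ 2 / 2))) := by
  have : ∀ i, SigmaFinite ((gaussianReal 0 1).withDensity
      fun x => ENNReal.ofReal (Real.exp (v i * x - v i ^ 2 / 2))) := fun i => by
    rw [← gaussianReal_one_eq_withDensity]
    infer_instance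
  have : ∀ i, SigmaFinite ((gaussianReal 0 1).map (· + v i)) := fun i => by
    rw [gaussianReal_map_add_const]
    infer_instance
  calc (stdGaussianPi ι).map (· + v)
      = Measure.pi fun i => (gaussianReal 0 1).map (· + v i) :=
        Measure.pi_map_pi (f := fun i x => x + v i) (by fun_prop)
    _ = Measure.pi fun i => (gaussianReal 0 1).withDensity
          fun x => ENNReal.ofReal (Real.exp (v i * x - v i ^ 2 / 2)) := by
        congr 1 with i : 1
        rw [gaussianReal_map_add_const, zero_add, gaussianReal_one_eq_withDensity]
    _ = (stdGaussianPi ι).withDensity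
          fun w => ENNReal.ofReal (Real.exp (∑ i, (v i * w i - v i ^ 2 / 2))) :=
        pi_withDensity_exp _ (by fun_prop)

variable {Z : Type*} [MeasurableSpace Z]

/-- The log-likelihood ratio, at a pair `(z, w)` of a covariate and a standard Gaussian noise
vector, between the noise shifted by `m z` and the noise itself. -/
noncomputable def shiftLogLikelihood (m : Z → ι → ℝ) (p : Z × (ι → ℝ)) : ℝ :=
  ∑ i, (m p.1 i * p.2 i - m p.1 i ^ 2 / 2)

lemma measurable_shiftLogLikelihood {m : Z → ι → ℝ} (hm : Measurable m) :
    Measurable (shiftLogLikelihood m) := by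
  unfold shiftLogLikelihood
  fun_prop

variable (ν : Measure Z) {m : Z → ι → ℝ}

lemma prod_stdGaussianPi_map_add (hm : Measurable m) :
    (ν.prod (stdGaussianPi ι)).map (fun p => (p.1, p.2 + m p.1)) =
      (ν.prod (stdGaussianPi ι)).withDensity
        fun p => ENNReal.ofReal (Real.exp (shiftLogLikelihood m p)) := by
  have density_meas := (measurable_shiftLogLikelihood hm).exp.ennreal_ofReal
  refine Measure.ext_of_lintegral _ fun f hf => ?_
  rw [lintegral_map hf (by fun_prop), lintegral_withDensity_eq_lintegral_mul _ density_meas hf,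
    lintegral_prod _ (by fun_prop), lintegral_prod _ (by fun_prop)]
  refine lintegral_congr fun z => ?_
  have hfz : Measurable fun w => f (z, w) := by fun_prop
  rw [← lintegral_map (f := fun w => f (z, w)) hfz (measurable_add_const (m z)),
    stdGaussianPi_map_add, lintegral_withDensity_eq_lintegral_mul _ (by fun_prop) hfz]
  rfl

variable [IsFiniteMeasure ν]

lemma integrable_fst_mul_eval_snd {g : Z → ℝ} (hg : MemLp g 2 ν) (i : ι) :
    Integrable (fun p => g p.1 * p.2 i) (ν.prod (stdGaussianPi ι)) :=
  (hg.integrable one_le_two).mul_prod ((memLp_eval_stdGaussianPi i).integrable one_le_two)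

lemma integrable_fst_mul_eval_snd_sub {g : Z → ℝ} (hg : MemLp g 2 ν) (i : ι) :
    Integrable (fun p => g p.1 * p.2 i - g p.1 ^ 2 / 2) (ν.prod (stdGaussianPi ι)) :=
  (integrable_fst_mul_eval_snd ν hg i).sub ((hg.integrable_sq.comp_fst _).div_const 2)

lemma integral_fst_mul_eval_snd_sub {g : Z → ℝ} (hg : MemLp g 2 ν) (i : ι) :
    ∫ p, (g p.1 * p.2 i - g p.1 ^ 2 / 2) ∂(ν.prod (stdGaussianPi ι)) =
      -(∫ z, g z ^ 2 ∂ν) / 2 := by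
  rw [integral_sub (integrable_fst_mul_eval_snd ν hg i) ((hg.integrable_sq.comp_fst _).div_const 2),
    integral_prod_mul g fun w : ι → ℝ => w i, integral_eval_stdGaussianPi, integral_div,
    integral_fun_fst fun z => g z ^ 2, probReal_univ, one_smul, mul_zero, zero_sub, neg_div]

lemma integrable_shiftLogLikelihood (hm : ∀ i, MemLp (fun z => m z i) 2 ν) :
    Integrable (shiftLogLikelihood m) (ν.prod (stdGaussianPi ι)) :=
  integrable_finsetSum _ fun i _ => integrable_fst_mul_eval_snd_sub ν (hm i) i

lemma integral_shiftLogLikelihood (hm : ∀ i, MemLp (fun z => m z i) 2 ν) :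
    ∫ p, shiftLogLikelihood m p ∂(ν.prod (stdGaussianPi ι)) = -(∑ i, ∫ z, m z i ^ 2 ∂ν) / 2 := by
  simp only [shiftLogLikelihood]
  rw [integral_finsetSum _ fun i _ => integrable_fst_mul_eval_snd_sub ν (hm i) i]
  simp only [integral_fst_mul_eval_snd_sub ν (hm _), ← Finset.sum_div, Finset.sum_neg_distrib]

lemma exp_energy_div_two_le_testAffinity_pi_map_add {κ : Type*} [Fintype κ] (ν : Measure Z)
    [IsProbabilityMeasure ν] (hm : Measurable m) (hm_two : ∀ i, MemLp (fun z => m z i) 2 ν) :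
    ENNReal.ofReal (Real.exp (-(Fintype.card κ * ∑ i, ∫ z, m z i ^ 2 ∂ν) / 2) / 2) ≤
      testAffinity (Measure.pi fun _ : κ => ν.prod (stdGaussianPi ι))
        (Measure.pi fun _ : κ => (ν.prod (stdGaussianPi ι)).map fun p => (p.1, p.2 + m p.1)) := by
  have density := prod_stdGaussianPi_map_add ν hm
  have : IsProbabilityMeasure ((ν.prod (stdGaussianPi ι)).withDensity
      fun p => ENNReal.ofReal (Real.exp (shiftLogLikelihood m p))) :=
    density ▸ Measure.isProbabilityMeasure_map (by fun_prop)
  have affinity := exp_card_mul_integral_div_two_le_testAffinity_pi (ι := κ)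
    (measurable_shiftLogLikelihood hm) (integrable_shiftLogLikelihood ν hm_two)
  rw [integral_shiftLogLikelihood ν hm_two, mul_div_assoc', mul_neg] at affinity
  rwa [density]

end Gaussian

section LinearModel

variable {d k : ℕ} {SigT AT : Matrix (Fin d) (Fin d) ℝ}

lemma rho_sq (hAT : AT * ATᵀ = SigT) (W₁ W₂ : Matrix (Fin k) (Fin d) ℝ) :
    rho SigT W₁ W₂ ^ 2 = ∑ i, ∑ j, ((W₁ - W₂) * AT) i j ^ 2 := by
  have trace_eq : ((W₁ - W₂) * SigT * (W₁ - W₂)ᵀ).trace =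
      ∑ i, ∑ j, ((W₁ - W₂) * AT) i j ^ 2 := by
    rw [← hAT, ← Matrix.mul_assoc, Matrix.mul_assoc _ ATᵀ, ← transpose_mul, ← sum_hadamard_eq]
    simp only [hadamard_apply, sq]
  rw [rho, trace_eq, Real.sq_sqrt (by positivity)]

instance (σ : ℝ) (A : Matrix (Fin d) (Fin d) ℝ) (W : Matrix (Fin k) (Fin d) ℝ) :
    IsProbabilityMeasure (linLaw d k σ A W) :=
  Measure.isProbabilityMeasure_map (by fun_prop)

lemma linLaw_eq_map_shift {σ : ℝ} (hσ : σ ≠ 0) (A : Matrix (Fin d) (Fin d) ℝ)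
    (W W' : Matrix (Fin k) (Fin d) ℝ) :
    linLaw d k σ A W' =
      (((stdGaussianPi (Fin d)).prod (stdGaussianPi (Fin k))).map
        fun p => (p.1, p.2 + (σ⁻¹ • ((W' - W) * A)) *ᵥ p.1)).map
          fun p => (A *ᵥ p.1, W *ᵥ (A *ᵥ p.1) + σ • p.2) := by
  rw [Measure.map_map (by fun_prop) (by fun_prop), linLaw]
  congr 1 with p : 1
  simp only [Function.comp_apply, smul_add, smul_mulVec, smul_inv_smul₀ hσ, mulVec_mulVec,
    Matrix.sub_mul, sub_mulVec]
  congr 1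
  abel

lemma exp_rho_sq_div_two_le_testAffinity_pi_linLaw {κ : Type*} [Fintype κ] {σ : ℝ} (hσ : σ ≠ 0)
    (hAT : AT * ATᵀ = SigT) (W W' : Matrix (Fin k) (Fin d) ℝ) :
    ENNReal.ofReal (Real.exp (-(Fintype.card κ * (rho SigT W' W ^ 2 / σ ^ 2)) / 2) / 2) ≤
      testAffinity (Measure.pi fun _ : κ => linLaw d k σ AT W)
        (Measure.pi fun _ : κ => linLaw d k σ AT W') := by
  set B : Matrix (Fin k) (Fin d) ℝ := σ⁻¹ • ((W' - W) * AT) with hB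
  have energy : ∑ i, ∫ z, (B *ᵥ z) i ^ 2 ∂(stdGaussianPi (Fin d)) = rho SigT W' W ^ 2 / σ ^ 2 := by
    calc ∑ i, ∫ z, (B *ᵥ z) i ^ 2 ∂(stdGaussianPi (Fin d))
        = ∑ i, ∑ j, B i j ^ 2 :=
          Finset.sum_congr rfl fun i _ => integral_dotProduct_sq_stdGaussianPi (B i)
      _ = rho SigT W' W ^ 2 / σ ^ 2 := by
          simp only [hB, Matrix.smul_apply, smul_eq_mul, mul_pow, ← Finset.mul_sum, rho_sq hAT,
            inv_pow, div_eq_inv_mul]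
  have : IsProbabilityMeasure (((stdGaussianPi (Fin d)).prod (stdGaussianPi (Fin k))).map
      fun p => (p.1, p.2 + B *ᵥ p.1)) := Measure.isProbabilityMeasure_map (by fun_prop)
  rw [linLaw_eq_map_shift hσ AT W W', ← energy]
  exact (exp_energy_div_two_le_testAffinity_pi_map_add (stdGaussianPi (Fin d))
    (m := fun z => B *ᵥ z) (by fun_prop) fun i => memLp_dotProduct_stdGaussianPi (B i)).trans
      (testAffinity_pi_le_map (by fun_prop) _ _)

end LinearModel

lemma intUnits_cast_sq (u : ℤˣ) : ((u : ℤ) : ℝ) ^ 2 = 1 := by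
  rcases Int.units_eq_one_or u with rfl | rfl <;> simp

section Assouad

variable {κ : Type*} [Fintype κ] [DecidableEq κ]

-- Multiplication by `Pi.mulSingle x (-1)` flips the sign at `x`, a bijection of the hypercube;
-- averaging over all vertices produces the vertex `e`.
lemma exists_signs_card_mul_le_two_mul_sum {Φ : κ → (κ → ℤˣ) → ENNReal} {c : ENNReal}
    (hΦ : ∀ x e, c ≤ Φ x e + Φ x (e * Pi.mulSingle x (-1))) :
    ∃ e, Fintype.card κ * c ≤ 2 * ∑ x, Φ x e := by
  obtain ⟨e, he⟩ := Finite.exists_max fun e => ∑ x, Φ x e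
  refine ⟨e, ?_⟩
  set V : ENNReal := ↑(Fintype.card (κ → ℤˣ))
  have coordinate (x : κ) : V * c ≤ 2 * ∑ e, Φ x e := by
    calc V * c = ∑ _ : κ → ℤˣ, c := by simp [V]
      _ ≤ ∑ e, (Φ x e + Φ x (e * Pi.mulSingle x (-1))) := Finset.sum_le_sum fun e _ => hΦ x e
      _ = 2 * ∑ e, Φ x e := by
        rw [Finset.sum_add_distrib, two_mul]
        congr 1
        exact Equiv.sum_comp (Equiv.mulRight (Pi.mulSingle x (-1))) (Φ x)
  refine (ENNReal.mul_le_mul_iff_right (a := V) (by simp [V]) (by simp [V])).mp ?_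
  calc V * (Fintype.card κ * c) = ∑ _ : κ, V * c := by simp; ring
    _ ≤ ∑ x, 2 * ∑ e, Φ x e := Finset.sum_le_sum fun x _ => coordinate x
    _ = 2 * ∑ e, ∑ x, Φ x e := by rw [← Finset.mul_sum, Finset.sum_comm]
    _ ≤ 2 * ∑ _ : κ → ℤˣ, ∑ x, Φ x e :=
        mul_le_mul_right (Finset.sum_le_sum fun e' _ => he e') 2
    _ = V * (2 * ∑ x, Φ x e) := by simp [V]; ring

lemma assouad_sum_sq {𝒳 : Type*} [MeasurableSpace 𝒳] {P : (κ → ℤˣ) → Measure 𝒳} {α : ENNReal}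
    (hP : ∀ x e, α ≤ testAffinity (P e) (P (e * Pi.mulSingle x (-1))))
    {θ : 𝒳 → κ → ℝ} (hθ : Measurable θ) (δ : ℝ) :
    ∃ e, Fintype.card κ * (ENNReal.ofReal (δ ^ 2) * α) ≤
      ∫⁻ p, ENNReal.ofReal (∑ x, (θ p x - δ * (e x : ℤ)) ^ 2) ∂(P e) := by
  let Φ x (e : κ → ℤˣ) := ∫⁻ p, ENNReal.ofReal ((θ p x - δ * (e x : ℤ)) ^ 2) ∂(P e)
  have two_point (x : κ) (e : κ → ℤˣ) :
      2 * (ENNReal.ofReal (δ ^ 2) * α) ≤ Φ x e + Φ x (e * Pi.mulSingle x (-1)) := by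
    set e' := e * Pi.mulSingle x (-1)
    have separation : (δ * (e x : ℤ) - δ * (e' x : ℤ)) ^ 2 / 2 = 2 * δ ^ 2 := by
      simp only [e', Pi.mul_apply, Pi.mulSingle_eq_same, mul_neg, mul_one, Units.val_neg,
        Int.cast_neg]
      linear_combination 2 * δ ^ 2 * intUnits_cast_sq (e x)
    calc 2 * (ENNReal.ofReal (δ ^ 2) * α)
        ≤ 2 * (ENNReal.ofReal (δ ^ 2) * testAffinity (P e) (P e')) := by
          gcongr
          exact hP x e
      _ = ENNReal.ofReal ((δ * (e x : ℤ) - δ * (e' x : ℤ)) ^ 2 / 2) *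
            testAffinity (P e) (P e') := by
          rw [separation, ENNReal.ofReal_mul zero_le_two, ENNReal.ofReal_ofNat, mul_assoc]
      _ ≤ Φ x e + Φ x e' := half_sq_sub_mul_testAffinity_le _ _ (by fun_prop) _ _
  obtain ⟨e, he⟩ := exists_signs_card_mul_le_two_mul_sum two_point
  rw [mul_left_comm, ENNReal.mul_le_mul_iff_right two_ne_zero ENNReal.ofNat_ne_top] at he
  refine ⟨e, he.trans_eq ?_⟩
  simp only [ENNReal.ofReal_sum_of_nonneg fun _ _ => sq_nonneg _, Φ]
  exact (lintegral_finsetSum _ fun x _ => by fun_prop).symm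

end Assouad

section Hypercube

variable {d k : ℕ} {SigT AT : Matrix (Fin d) (Fin d) ℝ}

/-- The vertex with sign vector `e` of the hypercube of parameters with centre `W₀` and half side
`δ`. The factor `A⁻¹` makes it a hypercube for `rho (A * Aᵀ)`: the entries of
`(hypercubeVertex A W₀ δ e - W₀) * A` are `± δ`. -/
noncomputable def hypercubeVertex (A : Matrix (Fin d) (Fin d) ℝ) (W₀ : Matrix (Fin k) (Fin d) ℝ)
    (δ : ℝ) (e : Fin k × Fin d → ℤˣ) : Matrix (Fin k) (Fin d) ℝ :=
  W₀ + of (fun i j => δ * (e (i, j) : ℤ)) * A⁻¹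

lemma isUnit_det_of_mul_transpose_posDef (hST : SigT.PosDef) (hAT : AT * ATᵀ = SigT) :
    IsUnit AT.det := by
  have det_eq : SigT.det = AT.det * AT.det := by rw [← hAT, det_mul, det_transpose]
  exact isUnit_iff_ne_zero.mpr (left_ne_zero_of_mul (det_eq ▸ hST.det_pos.ne'))

lemma hypercubeVertex_sub_mul {A : Matrix (Fin d) (Fin d) ℝ} (hA : IsUnit A.det)
    (W₀ : Matrix (Fin k) (Fin d) ℝ) (δ : ℝ) (e : Fin k × Fin d → ℤˣ) :
    (hypercubeVertex A W₀ δ e - W₀) * A = of fun i j => δ * (e (i, j) : ℤ) := by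
  rw [hypercubeVertex, add_sub_cancel_left, Matrix.mul_assoc, nonsing_inv_mul _ hA, Matrix.mul_one]

lemma rho_hypercubeVertex_sq (hA : IsUnit AT.det) (hAT : AT * ATᵀ = SigT)
    (W W₀ : Matrix (Fin k) (Fin d) ℝ) (δ : ℝ) (e : Fin k × Fin d → ℤˣ) :
    rho SigT W (hypercubeVertex AT W₀ δ e) ^ 2 =
      ∑ x : Fin k × Fin d, (((W - W₀) * AT) x.1 x.2 - δ * (e x : ℤ)) ^ 2 := by
  rw [rho_sq hAT, Fintype.sum_prod_type, ← sub_sub_sub_cancel_right W _ W₀, Matrix.sub_mul,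
    hypercubeVertex_sub_mul hA]
  rfl

lemma rho_centre_hypercubeVertex_sq (hA : IsUnit AT.det) (hAT : AT * ATᵀ = SigT)
    (W₀ : Matrix (Fin k) (Fin d) ℝ) (δ : ℝ) (e : Fin k × Fin d → ℤˣ) :
    rho SigT W₀ (hypercubeVertex AT W₀ δ e) ^ 2 = d * k * δ ^ 2 := by
  rw [rho_hypercubeVertex_sq hA hAT]
  simp [mul_pow, intUnits_cast_sq, mul_comm (d : ℝ)]

lemma rho_neighbour_hypercubeVertex_sq (hA : IsUnit AT.det) (hAT : AT * ATᵀ = SigT)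
    (W₀ : Matrix (Fin k) (Fin d) ℝ) (δ : ℝ) (x : Fin k × Fin d) (e : Fin k × Fin d → ℤˣ) :
    rho SigT (hypercubeVertex AT W₀ δ (e * Pi.mulSingle x (-1))) (hypercubeVertex AT W₀ δ e) ^ 2 =
      4 * δ ^ 2 := by
  rw [rho_hypercubeVertex_sq hA hAT, hypercubeVertex_sub_mul hA, Fintype.sum_eq_single x]
  · simp only [of_apply, Pi.mul_apply, Pi.mulSingle_eq_same, mul_neg, mul_one, Units.val_neg,
      Int.cast_neg]
    linear_combination 4 * δ ^ 2 * intUnits_cast_sq (e x)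
  · intro y hy
    simp [Pi.mulSingle_eq_of_ne hy]

lemma exists_hypercubeVertex_risk_ge {𝒳 : Type*} [MeasurableSpace 𝒳] (μ : Measure 𝒳)
    [IsProbabilityMeasure μ] {σ : ℝ} (hσ : σ ≠ 0) (hA : IsUnit AT.det) (hAT : AT * ATᵀ = SigT)
    (n : ℕ) (δ : ℝ) (W₀ : Matrix (Fin k) (Fin d) ℝ)
    {Wh : 𝒳 × (Fin n → (Fin d → ℝ) × (Fin k → ℝ)) → Fin k → Fin d → ℝ} (hWh : Measurable Wh) :
    ∃ e, ENNReal.ofReal (d * k * δ ^ 2 / 2 * Real.exp (-(2 * n * δ ^ 2 / σ ^ 2))) ≤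
      ∫⁻ st, ENNReal.ofReal (rho SigT (of (Wh st)) (hypercubeVertex AT W₀ δ e) ^ 2)
        ∂(μ.prod (Measure.pi fun _ : Fin n => linLaw d k σ AT (hypercubeVertex AT W₀ δ e))) := by
  set P := fun e =>
    μ.prod (Measure.pi fun _ : Fin n => linLaw d k σ AT (hypercubeVertex AT W₀ δ e))
  have affinity x e : ENNReal.ofReal (Real.exp (-(2 * n * δ ^ 2 / σ ^ 2)) / 2) ≤
      testAffinity (P e) (P (e * Pi.mulSingle x (-1))) := by
    refine le_of_eq_of_le ?_ ((exp_rho_sq_div_two_le_testAffinity_pi_linLaw hσ hAT _ _).trans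
      (testAffinity_le_prod μ _ _))
    rw [rho_neighbour_hypercubeVertex_sq hA hAT, Fintype.card_fin]
    ring_nf
  have coordinates_meas :
      Measurable fun st (x : Fin k × Fin d) => ((of (Wh st) - W₀) * AT) x.1 x.2 := by
    simp only [Matrix.mul_apply, Matrix.sub_apply, of_apply]
    fun_prop
  obtain ⟨e, he⟩ := assouad_sum_sq affinity coordinates_meas δ
  simp only [← rho_hypercubeVertex_sq hA hAT] at he
  refine ⟨e, le_of_eq_of_le ?_ he⟩
  rw [← ENNReal.ofReal_mul (sq_nonneg δ), ← ENNReal.ofReal_natCast,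
    ← ENNReal.ofReal_mul (Nat.cast_nonneg _), Fintype.card_prod, Fintype.card_fin, Fintype.card_fin]
  push_cast
  ring_nf

end Hypercube

theorem minimax_lower_bound_moderate_distance_general {𝒳 : Type*} [MeasurableSpace 𝒳]
    (μ : Measure 𝒳) [IsProbabilityMeasure μ] {d k : ℕ} (hd : 0 < d) (hk : 0 < k)
    {σ : ℝ} (hσ : σ ≠ 0) {SigT AT : Matrix (Fin d) (Fin d) ℝ} (hST : SigT.PosDef)
    (hAT : AT * ATᵀ = SigT) (n : ℕ) {Δ : ℝ} (hΔ : 0 ≤ Δ) (W₀ : Matrix (Fin k) (Fin d) ℝ)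
    {Wh : 𝒳 × (Fin n → (Fin d → ℝ) × (Fin k → ℝ)) → Fin k → Fin d → ℝ} (hWh : Measurable Wh) :
    ENNReal.ofReal (Δ ^ 2 / 2 * Real.exp (-(2 * n * Δ ^ 2 / (σ ^ 2 * (d * k))))) ≤
      ⨆ (W : Matrix (Fin k) (Fin d) ℝ) (_ : rho SigT W₀ W ≤ Δ),
        ∫⁻ st, ENNReal.ofReal (rho SigT (of (Wh st)) W ^ 2)
          ∂(μ.prod (Measure.pi fun _ : Fin n => linLaw d k σ AT W)) := by
  have hA := isUnit_det_of_mul_transpose_posDef hST hAT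
  have dim_pos : (0 : ℝ) < d * k := by positivity
  obtain ⟨δ, hδ⟩ : ∃ δ : ℝ, d * k * δ ^ 2 = Δ ^ 2 :=
    ⟨Δ / √(d * k), by rw [div_pow, Real.sq_sqrt dim_pos.le, mul_div_cancel₀ _ dim_pos.ne']⟩
  obtain ⟨e, risk⟩ := exists_hypercubeVertex_risk_ge μ hσ hA hAT n δ W₀ hWh
  have distance : rho SigT W₀ (hypercubeVertex AT W₀ δ e) ≤ Δ :=
    le_of_sq_le_sq (by rw [rho_centre_hypercubeVertex_sq hA hAT, hδ]) hΔ
  refine le_iSup₂_of_le (hypercubeVertex AT W₀ δ e) distance (le_of_eq_of_le ?_ risk)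
  rw [← hδ]
  congr 4
  field_simp

lemma moderate_distance_rate_le_exp {σ D M n Δ : ℝ} (hσ : σ ≠ 0) (hD : 0 < D) (hDM : D ≤ M)
    (hn : 0 < n) (hΔ0 : 0 ≤ Δ) (hΔ : Δ ≤ √(σ ^ 2 * D * Real.log 2 / n)) :
    1 / 100 * Δ ^ 2 * (1 - 0.8 * (n * Δ ^ 2) / (σ ^ 2 * D)) ≤
      Δ ^ 2 / 2 * Real.exp (-(2 * n * Δ ^ 2 / (σ ^ 2 * M))) := by
  have signal : n * Δ ^ 2 ≤ σ ^ 2 * D * Real.log 2 := by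
    rw [mul_comm, ← le_div_iff₀ hn]
    exact (Real.le_sqrt hΔ0 (by positivity)).mp hΔ
  have exponent : 2 * n * Δ ^ 2 / (σ ^ 2 * M) ≤ 2 * Real.log 2 := by
    rw [div_le_iff₀ (mul_pos (by positivity) (hD.trans_le hDM))]
    calc 2 * n * Δ ^ 2 ≤ 2 * (σ ^ 2 * D * Real.log 2) := by linarith
      _ ≤ 2 * (σ ^ 2 * M * Real.log 2) := by gcongr
      _ = 2 * Real.log 2 * (σ ^ 2 * M) := by ring
  calc 1 / 100 * Δ ^ 2 * (1 - 0.8 * (n * Δ ^ 2) / (σ ^ 2 * D))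
      ≤ 1 / 100 * Δ ^ 2 * 1 := by
        gcongr
        exact sub_le_self _ (by positivity)
    _ ≤ Δ ^ 2 / 2 * (1 / 4) := by linarith [sq_nonneg Δ]
    _ = Δ ^ 2 / 2 * Real.exp (-(2 * Real.log 2)) := by
        rw [Real.exp_neg, two_mul, Real.exp_add, Real.exp_log two_pos]
        norm_num
    _ ≤ Δ ^ 2 / 2 * Real.exp (-(2 * n * Δ ^ 2 / (σ ^ 2 * M))) := by gcongr

/-- minimax lower bound in the moderate transfer-distance regime
(Lemma `b1`, second part, of the paper). -/
theorem minimax_lower_bound_moderate_distance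
    (d k : ℕ) (hd : 1 ≤ d) (hk : 1 ≤ k) (σ : ℝ) (hσ : 0 < σ)
    (SigS SigT AS AT : Matrix (Fin d) (Fin d) ℝ)
    (hSS : SigS.PosSemidef) (hST : SigT.PosDef)
    (hAS : AS * ASᵀ = SigS) (hAT : AT * ATᵀ = SigT)
    (D : ℝ) (hD : D = d * k - 1) (hD20 : 20 ≤ D)
    (nS nT : ℕ) (hnS : 1 ≤ nS) (hnT : 1 ≤ nT)
    (Δ : ℝ) (hΔ0 : 0 < Δ) (hΔ : Δ < Real.sqrt (σ ^ 2 * D * Real.log 2 / nT))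
    (Wh : (Fin nS → (Fin d → ℝ) × (Fin k → ℝ)) × (Fin nT → (Fin d → ℝ) × (Fin k → ℝ)) →
      Fin k → Fin d → ℝ)
    (hWh : Measurable Wh) :
    ENNReal.ofReal ((1 / 100) * Δ ^ 2 * (1 - 0.8 * (nT * Δ ^ 2) / (σ ^ 2 * D))) ≤
      ⨆ (WS : Matrix (Fin k) (Fin d) ℝ) (WT : Matrix (Fin k) (Fin d) ℝ)
        (_ : rho SigT WS WT ≤ Δ),
        ∫⁻ st, ENNReal.ofReal (rho SigT (Matrix.of (Wh st)) WT ^ 2)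
          ∂((Measure.pi fun _ : Fin nS => linLaw d k σ AS WS).prod
            (Measure.pi fun _ : Fin nT => linLaw d k σ AT WT)) := by
  have lower_bound := minimax_lower_bound_moderate_distance_general
    (Measure.pi fun _ : Fin nS => linLaw d k σ AS 0) hd hk hσ.ne' hST hAT nT hΔ0.le 0 hWh
  have rate := moderate_distance_rate_le_exp (M := d * k) (n := nT) hσ.ne' (by linarith)
    (by linarith) (by positivity) hΔ0.le hΔ.le
  exact (ENNReal.ofReal_le_ofReal rate).trans (lower_bound.trans (le_iSup_of_le 0 le_rfl))
end
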